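/- Assume Hypothesis (A) holds and let u ∈ L^∞([0,T], 𝒰) be a fixed control. Let (Y^1, μ^1) and (Y^2, μ^2) be two solutions (in the sense of Definition of solution) of the coupled system Ẏ_k = u_k (k=1,…,m), ∂_t μ + ∇·[(H*μ + Σ_{ℓ=1}^d G^ℓ*μ_{mℓ}) μ] = 0, relative to the same control u and to respective initial data (Y^{0,i}, μ^{0,i}) ∈ χ with μ^{0,i} compactly supported, i = 1,2. Then there exists a constant C_T > 0 such that ‖(Y^1(t), μ^1(t)) − (Y^2(t), μ^2(t))‖_χ ≤ C_T ‖(Y^{0,1}, μ^{0,1}) − (Y^{0,2}, μ^{0,2})‖_χ for all t ∈ [0,T]. -/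

import Mathlib

open MeasureTheory Set Metric
open scoped BigOperators ENNReal NNReal RealInnerProductSpace

noncomputable section

/-- The set of couplings of two measures: probability measures on the product with the
prescribed marginals. -/
def couplings {E : Type*} [MeasurableSpace E]
    (μ ν : Measure E) : Set (Measure (E × E)) :=
  {π | IsProbabilityMeasure π ∧ π.map Prod.fst = μ ∧ π.map Prod.snd = ν}

/-- The 1-Wasserstein distance `W₁(μ,ν) = inf_{π ∈ Π(μ,ν)} ∫ |x−y| dπ(x,y)`. -/
def W1 {E : Type*} [MeasurableSpace E] [PseudoMetricSpace E]
    (μ ν : Measure E) : ℝ :=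
  sInf ((fun π : Measure (E × E) => ∫ p, dist p.1 p.2 ∂π) '' couplings μ ν)

/-- The topological support of a measure. -/
def msupport {E : Type*} [MeasurableSpace E] [TopologicalSpace E]
    (μ : Measure E) : Set E :=
  {x | ∀ U ∈ nhds x, μ U ≠ 0}

/-- The distance on `χ = ℝ^{dm} × 𝒫₁(ℝ^d)`:
`‖(Y,μ) − (Y',μ')‖_χ = (1/m) ∑_k |Y_k − Y'_k| + W₁(μ,μ')`. -/
def chiDist {d m : ℕ}
    (Y Y' : Fin m → EuclideanSpace ℝ (Fin d))
    (μ μ' : Measure (EuclideanSpace ℝ (Fin d))) : ℝ :=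
  (m : ℝ)⁻¹ * ∑ k : Fin m, ‖Y k - Y' k‖ + W1 μ μ'

/-- The empirical measure `(1/N) ∑_i δ_{X_i}`. -/
def empMeas {d N : ℕ} (X : Fin N → EuclideanSpace ℝ (Fin d)) :
    Measure (EuclideanSpace ℝ (Fin d)) :=
  (N : ℝ≥0∞)⁻¹ • ∑ i : Fin N, Measure.dirac (X i)

/-- The mean-field vector field `x ↦ (H*μ)(x) + ∑_ℓ (G^ℓ*μ_{mℓ})(x)`,
where `μ_{mℓ} = (1/m) ∑_k u_{kℓ} δ_{Y_k}`. -/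
def mfField {d m : ℕ}
    (H : EuclideanSpace ℝ (Fin d) → EuclideanSpace ℝ (Fin d))
    (G : Fin d → EuclideanSpace ℝ (Fin d) → EuclideanSpace ℝ (Fin d))
    (μ : Measure (EuclideanSpace ℝ (Fin d)))
    (u Y : Fin m → EuclideanSpace ℝ (Fin d))
    (x : EuclideanSpace ℝ (Fin d)) : EuclideanSpace ℝ (Fin d) :=
  (∫ ξ, H (x - ξ) ∂μ) + ∑ ℓ : Fin d, (m : ℝ)⁻¹ • ∑ k : Fin m, (u k ℓ) • G ℓ (x - Y k)

/-- Solution of the coupled leader/mean-field system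
`Ẏ_k = u_k`, `∂_t μ + ∇·[(H*μ + ∑_ℓ G^ℓ*μ_{mℓ}) μ] = 0` on `[0,T]`, in the sense of the
Definition of solution: `μ(t)` are probability measures, equi-compactly supported;
`(Y,μ)` is continuous w.r.t. the `χ`-metric; `Y` is a Carathéodory solution of
`Ẏ_k = u_k`; and the continuity equation holds in weak form against `C_c^∞` test
functions. -/
def IsMFSol {d m : ℕ} (T : ℝ)
    (H : EuclideanSpace ℝ (Fin d) → EuclideanSpace ℝ (Fin d))
    (G : Fin d → EuclideanSpace ℝ (Fin d) → EuclideanSpace ℝ (Fin d))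
    (u : ℝ → Fin m → EuclideanSpace ℝ (Fin d))
    (Y : ℝ → Fin m → EuclideanSpace ℝ (Fin d))
    (μ : ℝ → Measure (EuclideanSpace ℝ (Fin d))) : Prop :=
  (∀ t ∈ Icc (0:ℝ) T, IsProbabilityMeasure (μ t)) ∧
  (∃ R > 0, ∀ t ∈ Icc (0:ℝ) T,
      msupport (μ t) ⊆ closedBall (0 : EuclideanSpace ℝ (Fin d)) R) ∧
  (∀ t ∈ Icc (0:ℝ) T, ∀ ε > 0, ∃ δ > 0, ∀ s ∈ Icc (0:ℝ) T,
      |s - t| < δ → chiDist (Y s) (Y t) (μ s) (μ t) < ε) ∧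
  (∀ k, ∀ t ∈ Icc (0:ℝ) T, Y t k = Y 0 k + ∫ s in (0:ℝ)..t, u s k) ∧
  (∀ φ : EuclideanSpace ℝ (Fin d) → ℝ, ContDiff ℝ (⊤ : ℕ∞) φ → HasCompactSupport φ →
      ∀ t ∈ Icc (0:ℝ) T,
        ∫ x, φ x ∂(μ t) = (∫ x, φ x ∂(μ 0)) +
          ∫ s in (0:ℝ)..t,
            ∫ x, ⟪gradient φ x, mfField H G (μ s) (u s) (Y s) x⟫ ∂(μ s))

/-- Hypothesis (A): `H` and the `G^ℓ` are locally Lipschitz with sub-linear growth, the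
convolution with `H` is Lipschitz in the measure argument w.r.t. `W₁` (uniformly on balls,
for compactly supported probability measures), and the convolution with `G^ℓ` against
weighted empirical measures with common weights bounded by `M` is Lipschitz in the atoms. -/
def HypA {d : ℕ} (m : ℕ)
    (H : EuclideanSpace ℝ (Fin d) → EuclideanSpace ℝ (Fin d))
    (G : Fin d → EuclideanSpace ℝ (Fin d) → EuclideanSpace ℝ (Fin d)) : Prop :=
  LocallyLipschitz H ∧ (∀ ℓ, LocallyLipschitz (G ℓ)) ∧
  (∃ C ≥ 0, (∀ x, ‖H x‖ ≤ C * (1 + ‖x‖)) ∧ ∀ ℓ x, ‖G ℓ x‖ ≤ C * (1 + ‖x‖)) ∧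
  (∀ ρ > 0, ∀ R > 0, ∃ L ≥ 0,
    ∀ μ ν : Measure (EuclideanSpace ℝ (Fin d)),
      IsProbabilityMeasure μ → IsProbabilityMeasure ν →
      msupport μ ⊆ closedBall (0 : EuclideanSpace ℝ (Fin d)) R →
      msupport ν ⊆ closedBall (0 : EuclideanSpace ℝ (Fin d)) R →
      ∀ y ∈ closedBall (0 : EuclideanSpace ℝ (Fin d)) ρ,
        ‖(∫ ξ, H (y - ξ) ∂μ) - ∫ ξ, H (y - ξ) ∂ν‖ ≤ L * W1 μ ν) ∧
  (∀ ρ > 0, ∀ M ≥ 0, ∃ L ≥ 0, ∀ ℓ : Fin d, ∀ w : Fin m → ℝ, (∀ k, |w k| ≤ M) →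
    ∀ Y Y' : Fin m → EuclideanSpace ℝ (Fin d),
      ∀ y ∈ closedBall (0 : EuclideanSpace ℝ (Fin d)) ρ,
        ‖(m : ℝ)⁻¹ • ∑ k : Fin m, w k • (G ℓ (y - Y k) - G ℓ (y - Y' k))‖
          ≤ L * ((m : ℝ)⁻¹ * ∑ k : Fin m, ‖Y k - Y' k‖))

/-!
Both measures solve linear continuity equations whose fields, after composing with the projection
onto a ball carrying the supports, are bounded and Lipschitz in space. For such a field `w` a
solution `μ` is the limit of the images of `μ 0` under explicit Euler maps: one Euler step
transports `∫ f ∂μ` with an error of second order in the step when `f` is smooth, and replacing a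
Lipschitz `f` by its mollification costs in total an error proportional to the mollification scale.
Pushing a coupling of the initial measures forward by the Euler maps of the two fields and passing
to the limit gives Dobrushin's estimate
`W₁(μ₁ t, μ₂ t) ≤ exp (L t) (W₁(μ₁ 0, μ₂ 0) + ∫₀ᵗ κ)` for every continuous `κ` dominating the
distance between the fields. The difference of the leaders is constant in time, and Hypothesis (A)
bounds the distance between the fields by a multiple of the `χ`-distance, so the estimate closes by
Gronwall's argument.
-/

open Filter ProbabilityTheory
open scoped Topology ContDiff

section Wasserstein

variable {E : Type*} [MeasurableSpace E]

theorem ae_norm_le_of_msupport_subset {E : Type*} [SeminormedAddCommGroup E]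
    [SecondCountableTopology E] [MeasurableSpace E] {μ : Measure E} {R : ℝ}
    (h : msupport μ ⊆ closedBall 0 R) : ∀ᵐ x ∂μ, ‖x‖ ≤ R := by
  have : μ (closedBall (0 : E) R)ᶜ = 0 := by
    refine measure_null_of_locally_null _ fun x hx => ?_
    have hx' : x ∉ msupport μ := fun hx' => hx (h hx')
    simp only [msupport, mem_ofPred_eq, not_forall, not_not] at hx'
    obtain ⟨U, hU, hU0⟩ := hx'
    exact ⟨U, mem_nhdsWithin_of_mem_nhds hU, hU0⟩
  filter_upwards [compl_mem_ae_iff.2 this] with x hx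
  simpa using hx

theorem prod_mem_couplings (μ ν : Measure E) [IsProbabilityMeasure μ] [IsProbabilityMeasure ν] :
    μ.prod ν ∈ couplings μ ν :=
  ⟨inferInstance, by simp [Measure.map_fst_prod], by simp [Measure.map_snd_prod]⟩

theorem map_prodMap_mem_couplings {F : Type*} [MeasurableSpace F] {μ ν : Measure E}
    {π : Measure (E × E)} (hπ : π ∈ couplings μ ν) {X Y : E → F} (hX : Measurable X)
    (hY : Measurable Y) : π.map (Prod.map X Y) ∈ couplings (μ.map X) (ν.map Y) := by
  obtain ⟨hprob, rfl, rfl⟩ := hπ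
  refine ⟨Measure.isProbabilityMeasure_map (hX.prodMap hY).aemeasurable, ?_, ?_⟩
  · rw [Measure.map_map measurable_fst (hX.prodMap hY), Measure.map_map hX measurable_fst]
    rfl
  · rw [Measure.map_map measurable_snd (hX.prodMap hY), Measure.map_map hY measurable_snd]
    rfl

variable [PseudoMetricSpace E] {μ ν : Measure E} {π : Measure (E × E)} {x₀ : E}

theorem W1_nonneg (μ ν : Measure E) : 0 ≤ W1 μ ν := by
  refine Real.sInf_nonneg ?_
  rintro _ ⟨π, -, rfl⟩
  exact integral_nonneg fun _ => dist_nonneg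

theorem W1_le_integral_dist (hπ : π ∈ couplings μ ν) : W1 μ ν ≤ ∫ p, dist p.1 p.2 ∂π := by
  refine csInf_le ⟨0, ?_⟩ ⟨π, hπ, rfl⟩
  rintro _ ⟨π, -, rfl⟩
  exact integral_nonneg fun _ => dist_nonneg

theorem exists_mem_couplings_integral_dist_lt [IsProbabilityMeasure μ] [IsProbabilityMeasure ν]
    {c : ℝ} (h : W1 μ ν < c) : ∃ π ∈ couplings μ ν, ∫ p, dist p.1 p.2 ∂π < c := by
  obtain ⟨_, ⟨π, hπ, rfl⟩, hlt⟩ := exists_lt_of_csInf_lt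
    (Set.Nonempty.image _ ⟨_, prod_mem_couplings μ ν⟩) h
  exact ⟨π, hπ, hlt⟩

theorem le_mul_W1_add [IsProbabilityMeasure μ] [IsProbabilityMeasure ν] {a b c : ℝ}
    (ha : 0 ≤ a) (h : ∀ π ∈ couplings μ ν, c ≤ a * ∫ p, dist p.1 p.2 ∂π + b) :
    c ≤ a * W1 μ ν + b := by
  refine ge_of_tendsto (x := 𝓝[>] W1 μ ν) (f := fun r => a * r + b)
    (tendsto_nhdsWithin_of_tendsto_nhds (by fun_prop : Continuous fun r => a * r + b).continuousAt)
    ?_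
  filter_upwards [self_mem_nhdsWithin] with r hr
  obtain ⟨π, hπ, hπr⟩ := exists_mem_couplings_integral_dist_lt hr
  exact (h π hπ).trans (by gcongr)

variable [SecondCountableTopology E] [OpensMeasurableSpace E]

theorem integrable_of_lipschitzWith [IsFiniteMeasure μ] (hμ : Integrable (dist x₀) μ)
    {F : Type*} [NormedAddCommGroup F] {K : ℝ≥0} {f : E → F} (hf : LipschitzWith K f) :
    Integrable f μ := by
  refine ((integrable_const ‖f x₀‖).add (hμ.const_mul K)).mono'
    hf.continuous.aestronglyMeasurable (.of_forall fun x => ?_)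
  have : ‖f x - f x₀‖ ≤ K * dist x₀ x := by
    simpa [dist_eq_norm, dist_comm x₀] using hf.dist_le_mul x x₀
  simpa using (norm_le_norm_add_norm_sub' (f x) (f x₀)).trans (by gcongr)

theorem integrable_dist_of_mem_couplings (hπ : π ∈ couplings μ ν)
    (hμ : Integrable (dist x₀) μ) (hν : Integrable (dist x₀) ν) :
    Integrable (fun p => dist p.1 p.2) π := by
  obtain ⟨-, rfl, rfl⟩ := hπ
  refine ((hμ.comp_measurable measurable_fst).add (hν.comp_measurable measurable_snd)).mono'
    continuous_dist.aestronglyMeasurable (.of_forall fun p => ?_)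
  simpa [abs_of_nonneg dist_nonneg, dist_comm x₀ p.1] using dist_triangle p.1 x₀ p.2

theorem abs_integral_sub_le_mul_W1 [IsProbabilityMeasure μ] [IsProbabilityMeasure ν]
    (hμ : Integrable (dist x₀) μ) (hν : Integrable (dist x₀) ν) {K : ℝ≥0} {f : E → ℝ}
    (hf : LipschitzWith K f) : |(∫ x, f x ∂μ) - ∫ x, f x ∂ν| ≤ K * W1 μ ν := by
  rw [← add_zero (_ * _)]
  refine le_mul_W1_add K.2 fun π hπ => ?_
  have hdist := integrable_dist_of_mem_couplings hπ hμ hν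
  have hfμ := integrable_of_lipschitzWith hμ hf
  have hfν := integrable_of_lipschitzWith hν hf
  obtain ⟨-, rfl, rfl⟩ := hπ
  have hf₁ : Integrable (fun p => f p.1) π := hfμ.comp_measurable measurable_fst
  have hf₂ : Integrable (fun p => f p.2) π := hfν.comp_measurable measurable_snd
  rw [integral_map measurable_fst.aemeasurable hfμ.1,
    integral_map measurable_snd.aemeasurable hfν.1, add_zero, ← integral_sub hf₁ hf₂,
    ← integral_const_mul]
  exact abs_integral_le_integral_abs.trans
    (integral_mono (hf₁.sub hf₂).abs (hdist.const_mul K) fun p => hf.dist_le_mul p.1 p.2)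

theorem W1_map_map_le {F : Type*} [PseudoMetricSpace F] [SecondCountableTopology F]
    [MeasurableSpace F] [OpensMeasurableSpace F] [IsProbabilityMeasure μ] [IsProbabilityMeasure ν]
    (hμ : Integrable (dist x₀) μ) (hν : Integrable (dist x₀) ν) {X Y : E → F} (hX : Measurable X)
    (hY : Measurable Y) {a b : ℝ} (ha : 0 ≤ a) (hXY : ∀ x y, dist (X x) (Y y) ≤ a * dist x y + b) :
    W1 (μ.map X) (ν.map Y) ≤ a * W1 μ ν + b := by
  refine le_mul_W1_add ha fun π hπ => ?_
  have := hπ.1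
  have hdist := (integrable_dist_of_mem_couplings hπ hμ hν).const_mul a
  have hXYdist : Integrable (fun p => dist (X p.1) (Y p.2)) π := by
    refine (hdist.add (integrable_const b)).mono' (by fun_prop) (.of_forall fun p => ?_)
    simpa using hXY p.1 p.2
  calc W1 (μ.map X) (ν.map Y)
      ≤ ∫ q, dist q.1 q.2 ∂π.map (Prod.map X Y) :=
        W1_le_integral_dist (map_prodMap_mem_couplings hπ hX hY)
    _ = ∫ p, dist (X p.1) (Y p.2) ∂π :=
        integral_map (hX.prodMap hY).aemeasurable continuous_dist.aestronglyMeasurable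
    _ ≤ ∫ p, (a * dist p.1 p.2 + b) ∂π :=
        integral_mono hXYdist (hdist.add (integrable_const b)) fun p => hXY p.1 p.2
    _ = a * ∫ p, dist p.1 p.2 ∂π + b := by
        rw [integral_add hdist (integrable_const b), integral_const_mul]
        simp

end Wasserstein

section WassersteinLimit

variable {E : Type*} [MetricSpace E] [SecondCountableTopology E] [CompleteSpace E]
  [MeasurableSpace E] [BorelSpace E]

theorem isTightMeasureSet_range_of_tendsto {μ : ℕ → ProbabilityMeasure E}
    {μ' : ProbabilityMeasure E} (hμ : Tendsto μ atTop (𝓝 μ')) :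
    IsTightMeasureSet (range fun n => (μ n : Measure E)) := by
  have hcompact := hμ.isCompact_insert_range
  refine (isTightMeasureSet_of_isCompact_closure
    (hcompact.isClosed.closure_eq.symm ▸ hcompact)).subset ?_
  rintro _ ⟨n, rfl⟩
  exact ⟨μ n, mem_insert_of_mem _ (mem_range_self n), rfl⟩

theorem exists_tendsto_of_tendsto_marginals {μ ν : ℕ → ProbabilityMeasure E}
    {μ' ν' : ProbabilityMeasure E} {π : ℕ → ProbabilityMeasure (E × E)}
    (hπ : ∀ n, (π n : Measure (E × E)) ∈ couplings (μ n : Measure E) (ν n))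
    (hμ : Tendsto μ atTop (𝓝 μ')) (hν : Tendsto ν atTop (𝓝 ν')) :
    ∃ π' : ProbabilityMeasure (E × E), (π' : Measure (E × E)) ∈ couplings (μ' : Measure E) ν' ∧
      ∃ φ : ℕ → ℕ, StrictMono φ ∧ Tendsto (π ∘ φ) atTop (𝓝 π') := by
  have htight : IsTightMeasureSet {(ρ : Measure (E × E)) | ρ ∈ range π} := by
    refine .prodMk ((isTightMeasureSet_range_of_tendsto hμ).subset ?_)
      ((isTightMeasureSet_range_of_tendsto hν).subset ?_)
    · rintro _ ⟨_, ⟨_, ⟨n, rfl⟩, rfl⟩, rfl⟩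
      exact ⟨n, (hπ n).2.1.symm⟩
    · rintro _ ⟨_, ⟨_, ⟨n, rfl⟩, rfl⟩, rfl⟩
      exact ⟨n, (hπ n).2.2.symm⟩
  obtain ⟨π', -, φ, hφ, hlim⟩ := (isCompact_closure_of_isTightMeasureSet htight).tendsto_subseq
    fun n => subset_closure (mem_range_self n)
  have hmarginal {q : E × E → E} (hq : Continuous q) {ρ : ℕ → ProbabilityMeasure E}
      {ρ' : ProbabilityMeasure E} (hρ : Tendsto ρ atTop (𝓝 ρ'))
      (hπρ : ∀ n, (π n : Measure (E × E)).map q = ρ n) : (π' : Measure (E × E)).map q = ρ' := by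
    have hmap : (π'.map hq.measurable.aemeasurable) = ρ' := by
      refine tendsto_nhds_unique (((ProbabilityMeasure.continuous_map hq).tendsto π').comp hlim)
        ((hρ.comp hφ.tendsto_atTop).congr fun n => ?_)
      exact Subtype.ext (hπρ (φ n)).symm
    exact congrArg Subtype.val hmap
  exact ⟨π', ⟨inferInstance, hmarginal continuous_fst hμ fun n => (hπ n).2.1,
    hmarginal continuous_snd hν fun n => (hπ n).2.2⟩, φ, hφ, hlim⟩

theorem integral_le_of_tendsto_of_forall_integral_le {Ω : Type*} [PseudoMetricSpace Ω]
    [MeasurableSpace Ω]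
    [OpensMeasurableSpace Ω] {π : ℕ → ProbabilityMeasure Ω} {π' : ProbabilityMeasure Ω}
    (hπ : Tendsto π atTop (𝓝 π')) {f : Ω → ℝ} (hf : Continuous f) (hf0 : 0 ≤ f)
    (hint : ∀ n, Integrable f (π n)) {c : ℝ}
    (hc : ∀ n, ∫ x, f x ∂(π n : Measure Ω) ≤ c) : ∫ x, f x ∂(π' : Measure Ω) ≤ c := by
  have hc0 : 0 ≤ c := (integral_nonneg hf0).trans (hc 0)
  rw [integral_eq_lintegral_of_nonneg_ae (.of_forall hf0) hf.aestronglyMeasurable]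
  refine ENNReal.toReal_le_of_le_ofReal hc0 ?_
  refine (lintegral_le_liminf_lintegral_of_forall_isOpen_measure_le_liminf_measure hf hf0
    fun _ => ProbabilityMeasure.le_liminf_measure_open_of_tendsto hπ).trans ?_
  refine liminf_le_of_le (by isBoundedDefault) fun b hb => ?_
  obtain ⟨n, hn⟩ := hb.exists
  rw [← ofReal_integral_eq_lintegral_ofReal (hint n) (.of_forall hf0)] at hn
  exact hn.trans (ENNReal.ofReal_le_ofReal (hc n))

theorem W1_le_of_tendsto {μ ν : ℕ → ProbabilityMeasure E} {μ' ν' : ProbabilityMeasure E} {x₀ : E}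
    (hμ : Tendsto μ atTop (𝓝 μ')) (hν : Tendsto ν atTop (𝓝 ν'))
    (hμ₀ : ∀ n, Integrable (dist x₀) (μ n : Measure E))
    (hν₀ : ∀ n, Integrable (dist x₀) (ν n : Measure E)) {c : ℝ}
    (hc : ∀ n, W1 (μ n : Measure E) (ν n) ≤ c) : W1 (μ' : Measure E) ν' ≤ c := by
  refine le_of_forall_gt_imp_ge_of_dense fun c' hc' => ?_
  choose π hπ hπc using fun n => exists_mem_couplings_integral_dist_lt ((hc n).trans_lt hc')
  obtain ⟨π', hπ', φ, -, hφ⟩ := exists_tendsto_of_tendsto_marginals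
    (π := fun n => ⟨π n, (hπ n).1⟩) hπ hμ hν
  exact (W1_le_integral_dist hπ').trans <| integral_le_of_tendsto_of_forall_integral_le hφ
    continuous_dist (fun _ => dist_nonneg)
    (fun n => integrable_dist_of_mem_couplings (hπ (φ n)) (hμ₀ _) (hν₀ _)) fun n => (hπc (φ n)).le

end WassersteinLimit

theorem norm_image_add_sub_sub_fderiv_le {E F : Type*} [NormedAddCommGroup E] [NormedSpace ℝ E]
    [NormedAddCommGroup F] [NormedSpace ℝ F] {g : E → F} {A : ℝ≥0} (hg : Differentiable ℝ g)
    (hA : LipschitzWith A (fderiv ℝ g)) (x v : E) :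
    ‖g (x + v) - g x - fderiv ℝ g x v‖ ≤ A * ‖v‖ ^ 2 := by
  have hball : ∀ y ∈ closedBall x ‖v‖, ‖fderiv ℝ g y - fderiv ℝ g x‖ ≤ A * ‖v‖ := fun y hy =>
    (dist_eq_norm (fderiv ℝ g y) _ ▸ hA.dist_le_mul y x).trans (by gcongr; exact hy)
  have := (convex_closedBall x ‖v‖).norm_image_sub_le_of_norm_hasFDerivWithin_le'
    (fun y _ => (hg y).hasFDerivAt.hasFDerivWithinAt) hball
    (mem_closedBall_self (norm_nonneg v)) (by simp : x + v ∈ closedBall x ‖v‖)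
  rw [add_sub_cancel_left] at this
  exact this.trans_eq (by ring)

section Mollification

open scoped Convolution

variable {E : Type*} [NormedAddCommGroup E] [NormedSpace ℝ E] [FiniteDimensional ℝ E]
  [MeasurableSpace E] [BorelSpace E]

/-- The mollification `φ ⋆ f` of a scalar function by a normalized bump function, which regularizes
Lipschitz test functions. -/
def mollify (φ : ContDiffBump (0 : E)) (f : E → ℝ) : E → ℝ :=
  φ.normed Measure.addHaar ⋆[ContinuousLinearMap.lsmul ℝ ℝ, Measure.addHaar] f

variable {φ : ContDiffBump (0 : E)} {f g : E → ℝ} {K : ℝ≥0}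

theorem contDiff_mollify (hf : Continuous f) : ContDiff ℝ ∞ (mollify φ f) :=
  φ.hasCompactSupport_normed.contDiff_convolution_left _ φ.contDiff_normed
    hf.locallyIntegrable

theorem dist_mollify_le {x y : E} {c : ℝ} (hf : Continuous f) (hg : Continuous g)
    (h : ∀ z, ‖z‖ ≤ φ.rOut → dist (f (x - z)) (g (y - z)) ≤ c) :
    dist (mollify φ f x) (mollify φ g y) ≤ c := by
  have hint {k : E → ℝ} (hk : Continuous k) (w : E) :
      Integrable (fun z => φ.normed Measure.addHaar z • k (w - z)) Measure.addHaar :=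
    (φ.continuous_normed.smul (hk.comp (continuous_sub_left w))).integrable_of_hasCompactSupport
      φ.hasCompactSupport_normed.smul_right
  calc dist (mollify φ f x) (mollify φ g y)
      = ‖∫ z, φ.normed Measure.addHaar z • (f (x - z) - g (y - z)) ∂Measure.addHaar‖ := by
        simp only [smul_sub]
        rw [dist_eq_norm, integral_sub (hint hf x) (hint hg y)]
        rfl
    _ ≤ ∫ z, φ.normed Measure.addHaar z * c ∂Measure.addHaar := by
        refine norm_integral_le_of_norm_le (φ.integrable_normed.mul_const c)
          (.of_forall fun z => ?_)
        rw [norm_smul, Real.norm_of_nonneg (φ.nonneg_normed z)]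
        by_cases hz : ‖z‖ ≤ φ.rOut
        · exact mul_le_mul_of_nonneg_left (dist_eq_norm (f (x - z)) _ ▸ h z hz)
            (φ.nonneg_normed z)
        · have : z ∉ Function.support (φ.normed Measure.addHaar) := by
            rw [φ.support_normed_eq, mem_ball_zero_iff]
            exact fun h => hz h.le
          simp [Function.notMem_support.1 this]
    _ = c := by rw [integral_mul_const, φ.integral_normed, one_mul]

theorem abs_mollify_sub_le (hf : LipschitzWith K f) (x : E) :
    |mollify φ f x - f x| ≤ K * φ.rOut := by
  refine φ.dist_normed_convolution_le hf.continuous.aestronglyMeasurable fun y hy => ?_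
  exact (hf.dist_le_mul y x).trans (by gcongr; exact (mem_ball.1 hy).le)

theorem lipschitzWith_mollify (hf : LipschitzWith K f) : LipschitzWith K (mollify φ f) :=
  LipschitzWith.of_dist_le_mul fun x y => dist_mollify_le hf.continuous hf.continuous fun z _ => by
    simpa using hf.dist_le_mul (x - z) (y - z)

theorem fderiv_mollify_apply (hf : Continuous f) (x v : E) :
    fderiv ℝ (mollify φ f) x v =
      ∫ z, fderiv ℝ (φ.normed Measure.addHaar) z v * f (x - z) ∂Measure.addHaar := by
  have hφ : ContDiff ℝ 1 (φ.normed (Measure.addHaar (G := E))) := φ.contDiff_normed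
  rw [mollify, (φ.hasCompactSupport_normed.hasFDerivAt_convolution_left _ hφ
    hf.locallyIntegrable x).fderiv, convolution, ContinuousLinearMap.integral_apply]
  · rfl
  · exact φ.hasCompactSupport_normed.fderiv ℝ |>.convolutionExists_left _
      (hφ.continuous_fderiv one_ne_zero) hf.locallyIntegrable x

theorem exists_lipschitzWith_fderiv_mollify (φ : ContDiffBump (0 : E)) :
    ∃ C : ℝ≥0, ∀ (K : ℝ≥0) (f : E → ℝ), LipschitzWith K f →
      LipschitzWith (C * K) (fderiv ℝ (mollify φ f)) := by
  set η := φ.normed (Measure.addHaar (G := E))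
  have hη : Continuous (fderiv ℝ η) :=
    (φ.contDiff_normed (n := 1)).continuous_fderiv one_ne_zero
  have hηsupp : HasCompactSupport (fderiv ℝ η) := φ.hasCompactSupport_normed.fderiv ℝ
  have hηint := (hη.integrable_of_hasCompactSupport (μ := Measure.addHaar) hηsupp).norm
  refine ⟨(∫ z, ‖fderiv ℝ η z‖ ∂Measure.addHaar).toNNReal, fun K f hf =>
    LipschitzWith.of_dist_le_mul fun x y => ?_⟩
  have hint (v w : E) : Integrable (fun z => fderiv ℝ η z v * f (w - z)) Measure.addHaar :=
    ((hη.clm_apply continuous_const).mul (hf.continuous.comp (continuous_sub_left w)))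
      |>.integrable_of_hasCompactSupport
        ((hηsupp.comp_left (g := fun l : E →L[ℝ] ℝ => l v) rfl).mul_right)
  rw [dist_eq_norm, NNReal.coe_mul, Real.coe_toNNReal _ (integral_nonneg fun _ => norm_nonneg _)]
  refine ContinuousLinearMap.opNorm_le_bound _ (by positivity) fun v => ?_
  rw [sub_apply, fderiv_mollify_apply hf.continuous, fderiv_mollify_apply hf.continuous,
    ← integral_sub (hint v x) (hint v y), mul_assoc, mul_assoc, ← integral_mul_const]
  refine norm_integral_le_of_norm_le (hηint.mul_const _) (.of_forall fun z => ?_)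
  have hf' : ‖f (x - z) - f (y - z)‖ ≤ K * dist x y := by
    simpa [dist_eq_norm] using hf.dist_le_mul (x - z) (y - z)
  calc ‖fderiv ℝ η z v * f (x - z) - fderiv ℝ η z v * f (y - z)‖
      = ‖fderiv ℝ η z v‖ * ‖f (x - z) - f (y - z)‖ := by rw [← mul_sub, norm_mul]
    _ ≤ ‖fderiv ℝ η z‖ * ‖v‖ * (K * dist x y) :=
        mul_le_mul ((fderiv ℝ η z).le_opNorm v) hf' (norm_nonneg _) (by positivity)
    _ = ‖fderiv ℝ η z‖ * (K * (dist x y * ‖v‖)) := by ring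

end Mollification

theorem norm_integral_le_of_forall_norm_le {α F : Type*} [MeasurableSpace α]
    [NormedAddCommGroup F] [NormedSpace ℝ F] {μ : Measure α} [IsProbabilityMeasure μ] {f : α → F}
    {c : ℝ} (h : ∀ x, ‖f x‖ ≤ c) : ‖∫ x, f x ∂μ‖ ≤ c := by
  simpa using norm_integral_le_of_norm_le_const (μ := μ) (.of_forall h)

theorem abs_integral_sub_integral_le_of_forall_abs_sub_le {α : Type*} [MeasurableSpace α]
    {μ : Measure α} [IsProbabilityMeasure μ] {f g : α → ℝ} (hf : Integrable f μ)
    (hg : Integrable g μ) {c : ℝ} (h : ∀ x, |f x - g x| ≤ c) :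
    |(∫ x, f x ∂μ) - ∫ x, g x ∂μ| ≤ c := by
  rw [← integral_sub hf hg, ← Real.norm_eq_abs]
  exact norm_integral_le_of_forall_norm_le h

theorem le_of_forall_pos_le_add_mul {x y c : ℝ} (h : ∀ ε > 0, x ≤ y + c * ε) : x ≤ y :=
  ge_of_tendsto (x := 𝓝[>] 0) (f := fun ε => y + c * ε)
    (tendsto_nhdsWithin_of_tendsto_nhds <| by
      simpa using (by fun_prop : Continuous fun ε => y + c * ε).tendsto 0)
    (eventually_nhdsWithin_of_forall h)

section ContinuityEquation

variable {E : Type*} [NormedAddCommGroup E] [NormedSpace ℝ E]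

theorem lipschitzWith_apply_of_norm_le {A B K L : ℝ≥0} {Φ : E → E →L[ℝ] ℝ} {v : E → E}
    (hΦ : LipschitzWith A Φ) (hΦK : ∀ x, ‖Φ x‖ ≤ K) (hv : LipschitzWith L v)
    (hvB : ∀ x, ‖v x‖ ≤ B) : LipschitzWith (A * B + K * L) fun x => Φ x (v x) :=
  LipschitzWith.of_dist_le_mul fun x y => by
    calc dist (Φ x (v x)) (Φ y (v y))
        = ‖(Φ x - Φ y) (v x) + Φ y (v x - v y)‖ := by
          rw [dist_eq_norm, sub_apply, map_sub, sub_add_sub_cancel]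
      _ ≤ A * dist x y * B + K * (L * dist x y) := by
          refine norm_add_le_of_le ((Φ x - Φ y).le_of_opNorm_le_of_le ?_ (hvB x))
            ((Φ y).le_of_opNorm_le_of_le (hΦK y) ?_)
          · exact dist_eq_norm (Φ x) _ ▸ hΦ.dist_le_mul x y
          · exact dist_eq_norm (v x) _ ▸ hv.dist_le_mul x y
      _ = (A * B + K * L : ℝ≥0) * dist x y := by push_cast; ring

/-- The displacement accumulated over the time interval `[a, b]` by a particle kept at `x`: one
explicit Euler step of `ẋ = w s x`, with exact quadrature in time. -/
def timeIntegral (w : ℝ → E → E) (a b : ℝ) (x : E) : E :=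
  ∫ s in a..b, w s x

variable [MeasurableSpace E]

/-- A time-dependent vector field bounded by `B`, `L`-Lipschitz in space and measurable in time. -/
structure IsLipschitzField (B L : ℝ≥0) (w : ℝ → E → E) : Prop where
  norm_le : ∀ s x, ‖w s x‖ ≤ B
  lipschitzWith : ∀ s, LipschitzWith L (w s)
  measurable : ∀ x, Measurable fun s => w s x

/-- A curve of probability measures with finite first moments solving the linear continuity
equation `∂_t μ + ∇·(w μ) = 0` on `[0, T]`, in weak form against smooth Lipschitz functions. -/
structure IsTransport (T : ℝ) (w : ℝ → E → E) (μ : ℝ → Measure E) : Prop where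
  isProbabilityMeasure : ∀ s, IsProbabilityMeasure (μ s)
  integrable_dist : ∀ s, Integrable (dist 0) (μ s)
  measurable : Measurable μ
  integral_eq : ∀ ψ : E → ℝ, ContDiff ℝ ∞ ψ → ∀ K, LipschitzWith K ψ → ∀ t ∈ Icc 0 T,
    ∫ x, ψ x ∂μ t = (∫ x, ψ x ∂μ 0) + ∫ s in (0 : ℝ)..t, ∫ x, fderiv ℝ ψ x (w s x) ∂μ s

variable {B L : ℝ≥0} {w : ℝ → E → E} {a b : ℝ}

namespace IsLipschitzField

theorem norm_timeIntegral_le (hw : IsLipschitzField B L w) (h : ℝ≥0) (x : E) :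
    ‖timeIntegral w a (a + h) x‖ ≤ B * h := by
  simpa [timeIntegral] using intervalIntegral.norm_integral_le_of_norm_le_const
    (a := a) (b := a + h) fun s _ => hw.norm_le s x

variable [FiniteDimensional ℝ E] [BorelSpace E]

theorem measurable_uncurry (hw : IsLipschitzField B L w) : Measurable (Function.uncurry w) :=
  (measurable_uncurry_of_continuous_of_measurable (u := fun x s => w s x)
    (fun s => (hw.lipschitzWith s).continuous) hw.measurable).comp measurable_swap

theorem measurable_uncurry_apply (hw : IsLipschitzField B L w) {Φ : E → E →L[ℝ] ℝ}
    (hΦ : Continuous Φ) : Measurable (Function.uncurry fun s x => Φ x (w s x)) :=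
  isBoundedBilinearMap_apply.continuous.measurable.comp
    ((hΦ.measurable.comp measurable_snd).prodMk hw.measurable_uncurry)

theorem intervalIntegrable (hw : IsLipschitzField B L w) (x : E) :
    IntervalIntegrable (fun s => w s x) volume a b :=
  (intervalIntegrable_const (c := (B : ℝ))).mono_fun'
    (hw.measurable x).aestronglyMeasurable (.of_forall fun s => hw.norm_le s x)

theorem lipschitzWith_timeIntegral (hw : IsLipschitzField B L w) (h : ℝ≥0) :
    LipschitzWith (L * h) (timeIntegral w a (a + h)) :=
  LipschitzWith.of_dist_le_mul fun x y => by
    rw [dist_eq_norm, timeIntegral, timeIntegral,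
      ← intervalIntegral.integral_sub (hw.intervalIntegrable x) (hw.intervalIntegrable y)]
    refine (intervalIntegral.norm_integral_le_of_norm_le_const (C := L * dist x y)
      fun s _ => dist_eq_norm (w s x) _ ▸ (hw.lipschitzWith s).dist_le_mul x y).trans_eq ?_
    rw [add_sub_cancel_left, NNReal.abs_eq, NNReal.coe_mul]
    ring

theorem lipschitzWith_add_timeIntegral (hw : IsLipschitzField B L w) (h : ℝ≥0) :
    LipschitzWith (1 + L * h) fun x => x + timeIntegral w a (a + h) x :=
  LipschitzWith.id.add (hw.lipschitzWith_timeIntegral h)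

theorem integral_integral_apply (hw : IsLipschitzField B L w) (hab : a ≤ b)
    {μ : Measure E} [IsFiniteMeasure μ] {Φ : E → E →L[ℝ] ℝ} (hΦ : Continuous Φ) {K : ℝ}
    (hΦK : ∀ x, ‖Φ x‖ ≤ K) :
    ∫ s in a..b, ∫ x, Φ x (w s x) ∂μ = ∫ x, Φ x (timeIntegral w a b x) ∂μ := by
  have hint : Integrable (Function.uncurry fun s x => Φ x (w s x))
      ((volume.restrict (Ioc a b)).prod μ) :=
    .of_bound (hw.measurable_uncurry_apply hΦ).aestronglyMeasurable (K * B) (.of_forall fun p =>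
      (Φ p.2).le_of_opNorm_le_of_le (hΦK p.2) (hw.norm_le p.1 p.2))
  rw [intervalIntegral.integral_of_le hab, integral_integral_swap hint]
  congr with x
  rw [← intervalIntegral.integral_of_le hab]
  exact (Φ x).intervalIntegral_comp_comm (hw.intervalIntegrable x)

theorem intervalIntegrable_integral_apply (hw : IsLipschitzField B L w) {μ : ℝ → Measure E}
    (hμ : Measurable μ) [∀ s, IsProbabilityMeasure (μ s)] {Φ : E → E →L[ℝ] ℝ} (hΦ : Continuous Φ)
    {K : ℝ} (hΦK : ∀ x, ‖Φ x‖ ≤ K) :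
    IntervalIntegrable (fun s => ∫ x, Φ x (w s x) ∂μ s) volume a b := by
  let κ : Kernel ℝ E := ⟨μ, hμ⟩
  have : IsMarkovKernel κ := ⟨inferInstance⟩
  refine (intervalIntegrable_const (c := K * B)).mono_fun'
    (StronglyMeasurable.integral_kernel_prod_right (κ := κ)
      (hw.measurable_uncurry_apply hΦ).stronglyMeasurable).aestronglyMeasurable
    (.of_forall fun s => ?_)
  exact norm_integral_le_of_forall_norm_le fun x =>
    (Φ x).le_of_opNorm_le_of_le (hΦK x) (hw.norm_le s x)

end IsLipschitzField

namespace IsTransport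

variable [FiniteDimensional ℝ E] [BorelSpace E] {T : ℝ} {μ : ℝ → Measure E} {A K : ℝ≥0}
  {f g : E → ℝ}

theorem integral_sub_integral (hμ : IsTransport T w μ) (hw : IsLipschitzField B L w)
    (hg : ContDiff ℝ ∞ g) (hgK : LipschitzWith K g) (ha : a ∈ Icc 0 T) (hb : b ∈ Icc 0 T) :
    (∫ x, g x ∂μ b) - ∫ x, g x ∂μ a = ∫ s in a..b, ∫ x, fderiv ℝ g x (w s x) ∂μ s := by
  have := hμ.isProbabilityMeasure
  have hint (c d : ℝ) := hw.intervalIntegrable_integral_apply (a := c) (b := d) hμ.measurable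
    (hg.continuous_fderiv (by simp)) fun x => norm_fderiv_le_of_lipschitz ℝ hgK
  rw [hμ.integral_eq g hg K hgK a ha, hμ.integral_eq g hg K hgK b hb, add_sub_add_left_eq_sub,
    intervalIntegral.integral_interval_sub_left (hint _ _) (hint _ _)]

theorem abs_integral_sub_le_of_contDiff (hμ : IsTransport T w μ) (hw : IsLipschitzField B L w)
    (hg : ContDiff ℝ ∞ g) (hgK : LipschitzWith K g) (ha : 0 ≤ a) (hab : a ≤ b) (hb : b ≤ T) :
    |(∫ x, g x ∂μ b) - ∫ x, g x ∂μ a| ≤ K * B * (b - a) := by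
  have := hμ.isProbabilityMeasure
  rw [hμ.integral_sub_integral hw hg hgK ⟨ha, hab.trans hb⟩ ⟨ha.trans hab, hb⟩,
    ← abs_of_nonneg (sub_nonneg.2 hab), ← Real.norm_eq_abs]
  refine intervalIntegral.norm_integral_le_of_norm_le_const fun s _ => ?_
  exact norm_integral_le_of_forall_norm_le fun x =>
    (fderiv ℝ g x).le_of_opNorm_le_of_le (norm_fderiv_le_of_lipschitz ℝ hgK) (hw.norm_le s x)

theorem abs_integral_mollify_sub_le (hμ : IsTransport T w μ) (hf : LipschitzWith K f)
    (φ : ContDiffBump (0 : E)) (s : ℝ) :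
    |(∫ x, mollify φ f x ∂μ s) - ∫ x, f x ∂μ s| ≤ K * φ.rOut := by
  have := hμ.isProbabilityMeasure s
  exact abs_integral_sub_integral_le_of_forall_abs_sub_le
    (integrable_of_lipschitzWith (hμ.integrable_dist s) (lipschitzWith_mollify hf))
    (integrable_of_lipschitzWith (hμ.integrable_dist s) hf) (abs_mollify_sub_le hf)

theorem abs_integral_sub_le (hμ : IsTransport T w μ) (hw : IsLipschitzField B L w)
    (hf : LipschitzWith K f) (ha : 0 ≤ a) (hab : a ≤ b) (hb : b ≤ T) :
    |(∫ x, f x ∂μ b) - ∫ x, f x ∂μ a| ≤ K * B * (b - a) := by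
  refine le_of_forall_pos_le_add_mul (c := 2 * K) fun ε hε => ?_
  let φ : ContDiffBump (0 : E) := ⟨ε / 2, ε, by positivity, by linarith⟩
  have hsmooth := hμ.abs_integral_sub_le_of_contDiff hw (contDiff_mollify (φ := φ) hf.continuous)
    (lipschitzWith_mollify hf) ha hab hb
  have hφa : |_| ≤ K * ε := hμ.abs_integral_mollify_sub_le hf φ a
  have hφb : |_| ≤ K * ε := hμ.abs_integral_mollify_sub_le hf φ b
  rw [abs_le] at *
  constructor <;> linarith

variable {h : ℝ≥0}

-- Tested against `x ↦ Dg x (w s x)`, which is Lipschitz, the measure can be frozen at time `a`.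
theorem abs_integral_fderiv_sub_le (hμ : IsTransport T w μ) (hw : IsLipschitzField B L w)
    (hgK : LipschitzWith K g) (hgA : LipschitzWith A (fderiv ℝ g)) (ha : 0 ≤ a)
    (hb : a + h ≤ T) :
    |(∫ s in a..a + h, ∫ x, fderiv ℝ g x (w s x) ∂μ s) -
      ∫ x, fderiv ℝ g x (timeIntegral w a (a + h) x) ∂μ a| ≤
      (A * B + K * L) * B * h * h := by
  have := hμ.isProbabilityMeasure
  have hah : a ≤ a + h := le_add_of_nonneg_right h.2
  have hgK' (x : E) : ‖fderiv ℝ g x‖ ≤ K := norm_fderiv_le_of_lipschitz ℝ hgK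
  rw [← hw.integral_integral_apply hah hgA.continuous hgK', ← intervalIntegral.integral_sub
    (hw.intervalIntegrable_integral_apply hμ.measurable hgA.continuous hgK')
    (hw.intervalIntegrable_integral_apply measurable_const hgA.continuous hgK'),
    ← Real.norm_eq_abs]
  refine (intervalIntegral.norm_integral_le_of_norm_le_const fun s hs => ?_).trans_eq
    (by rw [add_sub_cancel_left, NNReal.abs_eq])
  rw [uIoc_of_le hah] at hs
  refine (hμ.abs_integral_sub_le hw (lipschitzWith_apply_of_norm_le hgA hgK'
    (hw.lipschitzWith s) (hw.norm_le s)) ha hs.1.le (hs.2.trans hb)).trans ?_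
  push_cast
  gcongr
  linarith [hs.2]

theorem abs_integral_sub_integral_add_timeIntegral_le (hμ : IsTransport T w μ)
    (hw : IsLipschitzField B L w) (hg : ContDiff ℝ ∞ g) (hgK : LipschitzWith K g)
    (hgA : LipschitzWith A (fderiv ℝ g)) (ha : 0 ≤ a) (hb : a + h ≤ T) :
    |(∫ x, g x ∂μ (a + h)) - ∫ x, g (x + timeIntegral w a (a + h) x) ∂μ a| ≤
      B * (2 * A * B + K * L) * h ^ 2 := by
  have := hμ.isProbabilityMeasure a
  have hah : a ≤ a + h := le_add_of_nonneg_right h.2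
  have htaylor : |(∫ x, g (x + timeIntegral w a (a + h) x) ∂μ a) - (∫ x, g x ∂μ a) -
      ∫ x, fderiv ℝ g x (timeIntegral w a (a + h) x) ∂μ a| ≤ A * (B * h) ^ 2 := by
    have hint {F : E → ℝ} {K : ℝ≥0} (hF : LipschitzWith K F) : Integrable F (μ a) :=
      integrable_of_lipschitzWith (hμ.integrable_dist a) hF
    have hcomp := hint (hgK.comp (hw.lipschitzWith_add_timeIntegral (a := a) h))
    have happly := hint (lipschitzWith_apply_of_norm_le hgA
      (fun x => norm_fderiv_le_of_lipschitz ℝ hgK) (hw.lipschitzWith_timeIntegral (a := a) h)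
      (B := B * h) (hw.norm_timeIntegral_le h))
    rw [sub_sub, ← integral_add (hint hgK) happly]
    refine abs_integral_sub_integral_le_of_forall_abs_sub_le hcomp ((hint hgK).add happly)
      fun x => ?_
    rw [Function.comp_apply, Pi.add_apply, ← sub_sub]
    refine (norm_image_add_sub_sub_fderiv_le (hg.differentiable (by simp)) hgA x _).trans ?_
    gcongr
    exact hw.norm_timeIntegral_le h x
  have hfrozen := hμ.abs_integral_fderiv_sub_le hw hgK hgA ha hb
  rw [← hμ.integral_sub_integral hw hg hgK ⟨ha, hah.trans hb⟩ ⟨ha.trans hah, hb⟩] at hfrozen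
  rw [abs_le] at *
  constructor <;> linarith

theorem abs_integral_mollify_sub_integral_mollify_le {φ : ContDiffBump (0 : E)} {C : ℝ≥0}
    (hμ : IsTransport T w μ) (hw : IsLipschitzField B L w) (hf : LipschitzWith K f)
    (hφ : LipschitzWith (C * K) (fderiv ℝ (mollify φ f))) (ha : 0 ≤ a) (hb : a + h ≤ T) :
    |(∫ x, mollify φ f x ∂μ (a + h)) -
      ∫ x, mollify φ (fun x => f (x + timeIntegral w a (a + h) x)) x ∂μ a| ≤
      h * K * (L * φ.rOut + B * (2 * C * B + L) * h) := by
  have := hμ.isProbabilityMeasure a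
  have hW := hw.lipschitzWith_timeIntegral (a := a) h
  have hidW := hw.lipschitzWith_add_timeIntegral (a := a) h
  have hstep := hμ.abs_integral_sub_integral_add_timeIntegral_le hw
    (contDiff_mollify (φ := φ) hf.continuous) (lipschitzWith_mollify hf) hφ ha hb
  have hcomm : |(∫ x, mollify φ f (x + timeIntegral w a (a + h) x) ∂μ a) -
      ∫ x, mollify φ (fun x => f (x + timeIntegral w a (a + h) x)) x ∂μ a| ≤
      K * (L * h * φ.rOut) := by
    refine abs_integral_sub_integral_le_of_forall_abs_sub_le
      (integrable_of_lipschitzWith (hμ.integrable_dist a) ((lipschitzWith_mollify hf).comp hidW))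
      (integrable_of_lipschitzWith (hμ.integrable_dist a) (lipschitzWith_mollify (hf.comp hidW)))
      fun x => ?_
    refine dist_mollify_le hf.continuous (hf.comp hidW).continuous fun z hz => ?_
    refine (hf.dist_le_mul _ _).trans (mul_le_mul_of_nonneg_left ?_ K.2)
    calc dist (x + timeIntegral w a (a + h) x - z) (x - z + timeIntegral w a (a + h) (x - z))
        = dist (timeIntegral w a (a + h) x) (timeIntegral w a (a + h) (x - z)) := by
          rw [add_sub_right_comm, dist_add_left]
      _ ≤ L * h * φ.rOut := by
          refine (hW.dist_le_mul x (x - z)).trans ?_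
          rw [NNReal.coe_mul, dist_self_sub_right]
          gcongr
  push_cast at hstep
  rw [abs_le] at *
  constructor <;> linarith

end IsTransport

/-- The explicit Euler scheme with step `h` for `ẋ = w s x`, after `j` steps from time `0`. -/
def eulerMap (w : ℝ → E → E) (h : ℝ≥0) : ℕ → E → E
  | 0 => id
  | j + 1 => fun x => eulerMap w h j x + timeIntegral w (j * h) (j * h + h) (eulerMap w h j x)

theorem IsLipschitzField.lipschitzWith_eulerMap [FiniteDimensional ℝ E] [BorelSpace E]
    (hw : IsLipschitzField B L w) (h : ℝ≥0) :
    ∀ j, LipschitzWith ((1 + L * h) ^ j) (eulerMap w h j)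
  | 0 => LipschitzWith.id
  | j + 1 => by
    rw [pow_succ']
    exact (hw.lipschitzWith_add_timeIntegral h).comp (hw.lipschitzWith_eulerMap h j)

section Comparison

variable [FiniteDimensional ℝ E] [BorelSpace E] {B₁ B₂ L₁ L₂ : ℝ≥0} {w₁ w₂ : ℝ → E → E}
  {κ : ℝ → ℝ} {T : ℝ}

theorem IsLipschitzField.norm_timeIntegral_sub_le (hw₁ : IsLipschitzField B₁ L₁ w₁)
    (hw₂ : IsLipschitzField B₂ L₂ w₂) (hκ : Continuous κ) (hab : a ≤ b)
    (hκw : ∀ s ∈ Icc a b, ∀ x, ‖w₁ s x - w₂ s x‖ ≤ κ s) (x : E) :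
    ‖timeIntegral w₁ a b x - timeIntegral w₂ a b x‖ ≤ ∫ s in a..b, κ s := by
  rw [timeIntegral, timeIntegral, ← intervalIntegral.integral_sub (hw₁.intervalIntegrable x)
    (hw₂.intervalIntegrable x)]
  exact intervalIntegral.norm_integral_le_of_norm_le hab
    (.of_forall fun s hs => hκw s (Ioc_subset_Icc_self hs) x) (hκ.intervalIntegrable _ _)

theorem IsLipschitzField.dist_add_timeIntegral_le (hw₁ : IsLipschitzField B₁ L₁ w₁)
    (hw₂ : IsLipschitzField B₂ L₂ w₂) (hκ : Continuous κ) (h : ℝ≥0)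
    (hκw : ∀ s ∈ Icc a (a + h), ∀ x, ‖w₁ s x - w₂ s x‖ ≤ κ s) (x y : E) :
    dist (x + timeIntegral w₁ a (a + h) x) (y + timeIntegral w₂ a (a + h) y) ≤
      (1 + L₁ * h) * dist x y + ∫ s in a..a + h, κ s := by
  refine (dist_triangle _ (y + timeIntegral w₁ a (a + h) y) _).trans (add_le_add ?_ ?_)
  · exact_mod_cast (hw₁.lipschitzWith_add_timeIntegral h).dist_le_mul x y
  · rw [dist_add_left, dist_eq_norm]
    exact hw₁.norm_timeIntegral_sub_le hw₂ hκ (le_add_of_nonneg_right h.2) hκw y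

theorem IsLipschitzField.dist_eulerMap_le (hw₁ : IsLipschitzField B₁ L₁ w₁)
    (hw₂ : IsLipschitzField B₂ L₂ w₂) (hκ : Continuous κ)
    (hκw : ∀ s ∈ Icc 0 T, ∀ x, ‖w₁ s x - w₂ s x‖ ≤ κ s) (h : ℝ≥0) (x y : E) (j : ℕ)
    (hj : j * h ≤ T) :
    dist (eulerMap w₁ h j x) (eulerMap w₂ h j y) ≤
      (1 + L₁ * h) ^ j * (dist x y + ∫ s in (0 : ℝ)..j * h, κ s) := by
  induction j with
  | zero => simp [eulerMap]
  | succ j ih =>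
    have hsucc : ((j + 1 : ℕ) : ℝ) * h = j * h + h := by push_cast; ring
    rw [hsucc] at hj ⊢
    have hle : (j * h : ℝ) ≤ j * h + h := le_add_of_nonneg_right h.2
    have h0 : (0 : ℝ) ≤ j * h := by positivity
    have hκw' : ∀ s ∈ Icc (j * h : ℝ) (j * h + h), ∀ x, ‖w₁ s x - w₂ s x‖ ≤ κ s :=
      fun s hs => hκw s ⟨h0.trans hs.1, hs.2.trans hj⟩
    specialize ih (hle.trans hj)
    set p := eulerMap w₁ h j x
    set q := eulerMap w₂ h j y
    set I := ∫ s in (j * h : ℝ)..j * h + h, κ s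
    have hsplit : ∫ s in (0 : ℝ)..j * h + h, κ s = (∫ s in (0 : ℝ)..j * h, κ s) + I :=
      (intervalIntegral.integral_add_adjacent_intervals (hκ.intervalIntegrable _ _)
        (hκ.intervalIntegrable _ _)).symm
    have hI : 0 ≤ I := intervalIntegral.integral_nonneg hle fun s hs =>
      (norm_nonneg _).trans (hκw' s hs 0)
    have hone : 1 ≤ (1 + L₁ * h : ℝ) ^ (j + 1) :=
      one_le_pow₀ (le_add_of_nonneg_right (by positivity))
    calc dist (p + timeIntegral w₁ (j * h) (j * h + h) p)
          (q + timeIntegral w₂ (j * h) (j * h + h) q)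
        ≤ (1 + L₁ * h) * dist p q + I := hw₁.dist_add_timeIntegral_le hw₂ hκ h hκw' p q
      _ ≤ (1 + L₁ * h) * ((1 + L₁ * h) ^ j * (dist x y + ∫ s in (0 : ℝ)..j * h, κ s)) +
          (1 + L₁ * h) ^ (j + 1) * I := by
          gcongr
          exact le_mul_of_one_le_left hI hone
      _ = (1 + L₁ * h) ^ (j + 1) * (dist x y + ∫ s in (0 : ℝ)..j * h + h, κ s) := by
          rw [hsplit]
          ring

end Comparison

namespace IsTransport

variable [FiniteDimensional ℝ E] [BorelSpace E] {T : ℝ} {μ : ℝ → Measure E} {K C h : ℝ≥0}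
  {φ : ContDiffBump (0 : E)} {f : E → ℝ}

theorem abs_integral_mollify_sub_integral_mollify_eulerMap_le (hμ : IsTransport T w μ)
    (hw : IsLipschitzField B L w) (hφ : ∀ (K : ℝ≥0) (f : E → ℝ), LipschitzWith K f →
      LipschitzWith (C * K) (fderiv ℝ (mollify φ f))) (hf : LipschitzWith K f) (j : ℕ)
    (hj : j * h ≤ T) :
    |(∫ x, mollify φ f x ∂μ (j * h)) - ∫ x, mollify φ (fun x => f (eulerMap w h j x)) x ∂μ 0| ≤
      j * h * K * (1 + L * h) ^ j * (L * φ.rOut + B * (2 * C * B + L) * h) := by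
  induction j generalizing K f with
  | zero => simp [eulerMap]
  | succ j ih =>
    have hsucc : ((j + 1 : ℕ) : ℝ) * h = j * h + h := by push_cast; ring
    rw [hsucc] at hj ⊢
    have hstep := hμ.abs_integral_mollify_sub_integral_mollify_le hw hf (hφ K f hf)
      (by positivity) hj
    have hrec := ih (hf.comp (hw.lipschitzWith_add_timeIntegral (a := j * h) h))
      ((le_add_of_nonneg_right h.2).trans hj)
    have hone : 1 ≤ (1 + L * h : ℝ) ^ (j + 1) :=
      one_le_pow₀ (le_add_of_nonneg_right (by positivity))
    set e := L * φ.rOut + B * (2 * C * B + L) * h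
    have he : 0 ≤ e := add_nonneg (mul_nonneg L.2 φ.rOut_pos.le) (by positivity)
    calc |(∫ x, mollify φ f x ∂μ (j * h + h)) -
          ∫ x, mollify φ (fun x => f (eulerMap w h (j + 1) x)) x ∂μ 0|
        ≤ h * K * e + j * h * (K * (1 + L * h)) * (1 + L * h) ^ j * e := by
          exact_mod_cast (abs_sub_le _ _ _).trans (add_le_add hstep hrec)
      _ ≤ h * K * (1 + L * h) ^ (j + 1) * e + j * h * K * (1 + L * h) ^ (j + 1) * e := by
          refine add_le_add (mul_le_mul_of_nonneg_right ?_ he) (le_of_eq (by ring))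
          exact le_mul_of_one_le_right (by positivity) hone
      _ = (j * h + h) * K * (1 + L * h) ^ (j + 1) * e := by ring

theorem abs_integral_sub_integral_eulerMap_le (hμ : IsTransport T w μ)
    (hw : IsLipschitzField B L w) (hφ : ∀ (K : ℝ≥0) (f : E → ℝ), LipschitzWith K f →
      LipschitzWith (C * K) (fderiv ℝ (mollify φ f))) (hf : LipschitzWith K f) (j : ℕ)
    (hj : j * h ≤ T) :
    |(∫ x, f x ∂μ (j * h)) - ∫ x, f (eulerMap w h j x) ∂μ 0| ≤
      K * (1 + L * h) ^ j * (j * h * (L * φ.rOut + B * (2 * C * B + L) * h) + 2 * φ.rOut) := by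
  have hone : 1 ≤ (1 + L * h : ℝ) ^ j := one_le_pow₀ (le_add_of_nonneg_right (by positivity))
  have hmain := hμ.abs_integral_mollify_sub_integral_mollify_eulerMap_le hw hφ hf j hj
  have hleft := hμ.abs_integral_mollify_sub_le hf φ (j * h)
  have hright := hμ.abs_integral_mollify_sub_le (hf.comp (hw.lipschitzWith_eulerMap h j)) φ 0
  have hK : K * φ.rOut ≤ K * (1 + L * h) ^ j * φ.rOut :=
    mul_le_mul_of_nonneg_right (le_mul_of_one_le_right K.2 hone) φ.rOut_pos.le
  push_cast [Function.comp_def] at hright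
  rw [abs_le] at *
  constructor <;> linarith

end IsTransport

theorem one_add_pow_le_exp_mul {x : ℝ} (hx : 0 ≤ x) (n : ℕ) : (1 + x) ^ n ≤ Real.exp (n * x) := by
  rw [Real.exp_nat_mul]
  gcongr
  linarith [Real.add_one_le_exp x]

theorem tendsto_of_forall_abs_sub_le_mul_add_div {x c : ℝ} {a : ℕ → ℝ}
    (h : ∀ ε > 0, ∃ D, ∀ n : ℕ, |x - a n| ≤ c * ε + D / (n + 1)) : Tendsto a atTop (𝓝 x) := by
  refine Metric.tendsto_nhds.2 fun δ hδ => ?_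
  obtain ⟨D, hD⟩ := h (δ / (2 * (|c| + 1))) (by positivity)
  have hc : c * (δ / (2 * (|c| + 1))) ≤ δ / 2 := by
    rw [mul_div_assoc', div_le_div_iff₀ (by positivity) two_pos]
    nlinarith [le_abs_self c]
  have hlim : Tendsto (fun n : ℕ => D / ((n : ℝ) + 1)) atTop (𝓝 0) := by
    simpa [div_eq_mul_inv] using tendsto_one_div_add_atTop_nhds_zero_nat.const_mul D
  filter_upwards [hlim.eventually_lt_const (half_pos hδ)] with n hn
  rw [dist_comm, Real.dist_eq]
  linarith [hD n]

namespace IsTransport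

variable [FiniteDimensional ℝ E] [BorelSpace E] {T : ℝ} {μ : ℝ → Measure E} {K : ℝ≥0}

theorem tendsto_integral_eulerMap (hμ : IsTransport T w μ) (hw : IsLipschitzField B L w)
    {f : E → ℝ} (hf : LipschitzWith K f) {t : ℝ≥0} (ht : t ≤ T) :
    Tendsto (fun n : ℕ => ∫ x, f (eulerMap w (t / (n + 1)) (n + 1) x) ∂μ 0) atTop
      (𝓝 (∫ x, f x ∂μ t)) := by
  refine tendsto_of_forall_abs_sub_le_mul_add_div (c := K * Real.exp (L * t) * (t * L + 2))
    fun ε hε => ?_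
  let φ : ContDiffBump (0 : E) := ⟨ε / 2, ε, by positivity, by linarith⟩
  obtain ⟨C, hC⟩ := exists_lipschitzWith_fderiv_mollify φ
  refine ⟨K * Real.exp (L * t) * (t * (B * (2 * C * B + L) * t)), fun n => ?_⟩
  have hnt : ((n + 1 : ℕ) : ℝ) * (t / (n + 1) : ℝ≥0) = t := by push_cast; field_simp
  have hpow : (1 + L * (t / (n + 1) : ℝ≥0) : ℝ) ^ (n + 1) ≤ Real.exp (L * t) :=
    (one_add_pow_le_exp_mul (by positivity) _).trans_eq (by rw [mul_left_comm, hnt])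
  have hstep := hμ.abs_integral_sub_integral_eulerMap_le (h := t / (n + 1)) hw hC hf (n + 1)
    (hnt.trans_le ht)
  rw [hnt] at hstep
  calc |(∫ x, f x ∂μ t) - ∫ x, f (eulerMap w (t / (n + 1)) (n + 1) x) ∂μ 0|
      ≤ K * Real.exp (L * t) *
          (t * (L * ε + B * (2 * C * B + L) * (t / (n + 1) : ℝ≥0)) + 2 * ε) := by
        refine hstep.trans ?_
        have : φ.rOut = ε := rfl
        rw [this]
        gcongr
    _ = K * Real.exp (L * t) * (t * L + 2) * ε +
          K * Real.exp (L * t) * (t * (B * (2 * C * B + L) * t)) / (n + 1) := by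
        push_cast
        ring

theorem exists_tendsto_map_eulerMap (hμ : IsTransport T w μ) (hw : IsLipschitzField B L w)
    {t : ℝ≥0} (ht : t ≤ T) :
    ∃ (ρ : ℕ → ProbabilityMeasure E) (ρ' : ProbabilityMeasure E),
      (∀ n, (ρ n : Measure E) = (μ 0).map (eulerMap w (t / (n + 1)) (n + 1))) ∧
      (ρ' : Measure E) = μ t ∧ (∀ n, Integrable (dist 0) (ρ n : Measure E)) ∧
      Tendsto ρ atTop (𝓝 ρ') := by
  have := hμ.isProbabilityMeasure
  have hlip (n : ℕ) := hw.lipschitzWith_eulerMap (t / (n + 1)) (n + 1)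
  have hmeas (n : ℕ) := (hlip n).continuous.aemeasurable (μ := μ 0)
  refine ⟨fun n => ⟨_, Measure.isProbabilityMeasure_map (hmeas n)⟩, ⟨μ t, inferInstance⟩,
    fun n => rfl, rfl, fun n => ?_, ?_⟩
  · exact (integrable_map_measure (by fun_prop) (hmeas n)).2
      (integrable_of_lipschitzWith (hμ.integrable_dist 0)
        ((LipschitzWith.dist_right 0).comp (hlip n)))
  · refine tendsto_iff_forall_lipschitz_integral_tendsto.2 fun f _ ⟨K, hf⟩ => ?_
    simpa only [ProbabilityMeasure.coe_mk, integral_map (hmeas _)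
      hf.continuous.aestronglyMeasurable] using hμ.tendsto_integral_eulerMap hw hf ht

theorem W1_le {B₁ B₂ L₁ L₂ : ℝ≥0} {w₁ w₂ : ℝ → E → E} {μ₁ μ₂ : ℝ → Measure E}
    (hμ₁ : IsTransport T w₁ μ₁) (hw₁ : IsLipschitzField B₁ L₁ w₁) (hμ₂ : IsTransport T w₂ μ₂)
    (hw₂ : IsLipschitzField B₂ L₂ w₂) {κ : ℝ → ℝ} (hκ : Continuous κ)
    (hκw : ∀ s ∈ Icc 0 T, ∀ x, ‖w₁ s x - w₂ s x‖ ≤ κ s) {t : ℝ} (ht : t ∈ Icc 0 T) :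
    W1 (μ₁ t) (μ₂ t) ≤ Real.exp (L₁ * t) * (W1 (μ₁ 0) (μ₂ 0) + ∫ s in (0 : ℝ)..t, κ s) := by
  have := hμ₁.isProbabilityMeasure
  have := hμ₂.isProbabilityMeasure
  lift t to ℝ≥0 using ht.1
  obtain ⟨ρ₁, ρ₁', hρ₁, hρ₁', hint₁, htendsto₁⟩ := hμ₁.exists_tendsto_map_eulerMap hw₁ ht.2
  obtain ⟨ρ₂, ρ₂', hρ₂, hρ₂', hint₂, htendsto₂⟩ := hμ₂.exists_tendsto_map_eulerMap hw₂ ht.2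
  rw [← hρ₁', ← hρ₂']
  refine W1_le_of_tendsto htendsto₁ htendsto₂ hint₁ hint₂ fun n => ?_
  have hnt : ((n + 1 : ℕ) : ℝ) * (t / (n + 1) : ℝ≥0) = t := by push_cast; field_simp
  have hκ0 : 0 ≤ ∫ s in (0 : ℝ)..t, κ s := intervalIntegral.integral_nonneg t.2 fun s hs =>
    (norm_nonneg _).trans (hκw s ⟨hs.1, hs.2.trans ht.2⟩ 0)
  rw [hρ₁, hρ₂, mul_add]
  refine W1_map_map_le (hμ₁.integrable_dist 0) (hμ₂.integrable_dist 0)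
    (hw₁.lipschitzWith_eulerMap _ _).continuous.measurable
    (hw₂.lipschitzWith_eulerMap _ _).continuous.measurable (Real.exp_pos _).le fun x y => ?_
  refine (hw₁.dist_eulerMap_le hw₂ hκ hκw (t / (n + 1)) x y (n + 1) (hnt.trans_le ht.2)).trans ?_
  rw [hnt, ← mul_add]
  gcongr
  exact (one_add_pow_le_exp_mul (by positivity) _).trans_eq (by rw [mul_left_comm, hnt])

end IsTransport

end ContinuityEquation

theorem measurable_measure_of_measurable_integral {α X : Type*} [MeasurableSpace α]
    [PseudoEMetricSpace X] [MeasurableSpace X] [BorelSpace X] {μ : α → Measure X}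
    [∀ a, IsProbabilityMeasure (μ a)]
    (h : ∀ (f : X → ℝ) (K : ℝ≥0), LipschitzWith K f → Measurable fun a => ∫ x, f x ∂μ a) :
    Measurable μ := by
  refine Measurable.measure_of_isPiSystem_of_isProbabilityMeasure
    (BorelSpace.measurable_eq.trans borel_eq_generateFrom_isClosed) isPiSystem_isClosed
    fun F hF => ?_
  have hδ : ∀ n : ℕ, (0 : ℝ) < 1 / (n + 1) := fun n => Nat.one_div_pos_of_nat
  refine measurable_of_tendsto_metrizable
    (f := fun n a => ENNReal.ofReal (∫ x, (thickenedIndicator (hδ n) F x : ℝ) ∂μ a))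
    (fun n => (h _ _ (lipschitzWith_thickenedIndicator (hδ n) F)).ennreal_ofReal)
    (tendsto_pi_nhds.2 fun a => ?_)
  refine (tendsto_lintegral_thickenedIndicator_of_isClosed (μ a) hF hδ
    tendsto_one_div_add_atTop_nhds_zero_nat).congr fun n => ?_
  rw [lintegral_coe_eq_integral _ (integrable_thickenedIndicator F (hδ n))]

theorem exists_lipschitzWith_one_retraction {E : Type*} [NormedAddCommGroup E]
    [InnerProductSpace ℝ E] {s : Set E} (hne : s.Nonempty) (hs : IsComplete s)
    (hconv : Convex ℝ s) :
    ∃ P : E → E, LipschitzWith 1 P ∧ (∀ x, P x ∈ s) ∧ ∀ x ∈ s, P x = x := by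
  choose P hPs hPmin using exists_norm_eq_iInf_of_complete_convex hne hs hconv
  have hvar : ∀ x, ∀ y ∈ s, ⟪x - P x, y - P x⟫ ≤ 0 := fun x =>
    (norm_eq_iInf_iff_real_inner_le_zero hconv (hPs x)).1 (hPmin x)
  refine ⟨P, LipschitzWith.of_dist_le_mul fun x y => ?_, hPs, fun x hx => ?_⟩
  · have hmono : ‖P x - P y‖ ^ 2 ≤ ⟪x - y, P x - P y⟫ := by
      have hadd := add_nonpos (hvar x _ (hPs y)) (hvar y _ (hPs x))
      rw [← real_inner_self_eq_norm_sq]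
      simp only [inner_sub_left, inner_sub_right] at hadd ⊢
      rw [real_inner_comm (P y) (P x)] at hadd
      linarith [real_inner_comm (P y) (P x)]
    have hcs := real_inner_le_norm (x - y) (P x - P y)
    rw [dist_eq_norm, dist_eq_norm, NNReal.coe_one, one_mul]
    by_contra! hlt
    nlinarith [norm_nonneg (x - y), norm_nonneg (P x - P y)]
  · have hxx := hvar x x hx
    rw [real_inner_self_nonpos, sub_eq_zero] at hxx
    exact hxx.symm

section BoundedSupport

variable {E : Type*} [SeminormedAddCommGroup E] [MeasurableSpace E] {μ ν : Measure E} {R : ℝ}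

theorem W1_le_of_ae_norm_le [IsProbabilityMeasure μ] [IsProbabilityMeasure ν]
    (hμ : ∀ᵐ x ∂μ, ‖x‖ ≤ R) (hν : ∀ᵐ x ∂ν, ‖x‖ ≤ R) : W1 μ ν ≤ R + R := by
  refine (W1_le_integral_dist (prod_mem_couplings μ ν)).trans ((le_abs_self _).trans ?_)
  have hdist : ∀ᵐ p ∂μ.prod ν, ‖dist p.1 p.2‖ ≤ R + R := by
    filter_upwards [Measure.quasiMeasurePreserving_fst.ae hμ,
      Measure.quasiMeasurePreserving_snd.ae hν] with p hp₁ hp₂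
    rw [Real.norm_of_nonneg dist_nonneg]
    exact (dist_le_norm_add_norm _ _).trans (add_le_add hp₁ hp₂)
  simpa using norm_integral_le_of_norm_le_const hdist

variable [SecondCountableTopology E] [OpensMeasurableSpace E]

theorem integrable_dist_of_ae_norm_le [IsFiniteMeasure μ] (h : ∀ᵐ x ∂μ, ‖x‖ ≤ R) :
    Integrable (dist 0) μ :=
  (integrable_const R).mono' (by fun_prop) (by simpa using h)

end BoundedSupport

section MeanFieldVectorField

theorem norm_inv_smul_sum_smul_le {F : Type*} [SeminormedAddCommGroup F] [NormedSpace ℝ F] {m : ℕ}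
    {w : Fin m → ℝ} {a : Fin m → F} {M c : ℝ} (hM : 0 ≤ M) (hc : 0 ≤ c) (hw : ∀ k, |w k| ≤ M)
    (ha : ∀ k, ‖a k‖ ≤ c) : ‖(m : ℝ)⁻¹ • ∑ k, w k • a k‖ ≤ M * c := by
  rw [norm_smul, norm_inv, RCLike.norm_natCast, inv_mul_eq_div]
  refine div_le_of_le_mul₀ m.cast_nonneg (by positivity) ?_
  refine (norm_sum_le_of_le _ fun k _ => ?_).trans_eq
    (by simp [mul_comm] : ∑ _k : Fin m, M * c = M * c * m)
  rw [norm_smul]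
  exact mul_le_mul (hw k) (ha k) (norm_nonneg _) hM

variable {d m : ℕ} {H : EuclideanSpace ℝ (Fin d) → EuclideanSpace ℝ (Fin d)}
  {G : Fin d → EuclideanSpace ℝ (Fin d) → EuclideanSpace ℝ (Fin d)}
  {μ : Measure (EuclideanSpace ℝ (Fin d))} {v Y : Fin m → EuclideanSpace ℝ (Fin d)}
  {x y : EuclideanSpace ℝ (Fin d)} {ρ : ℝ} {C K M : ℝ≥0}

theorem norm_sum_inv_smul_sum_le {a : Fin d → Fin m → EuclideanSpace ℝ (Fin d)} {c : ℝ}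
    (hc : 0 ≤ c) (hv : ∀ k, ‖v k‖ ≤ M) (ha : ∀ ℓ k, ‖a ℓ k‖ ≤ c) :
    ‖∑ ℓ, (m : ℝ)⁻¹ • ∑ k, v k ℓ • a ℓ k‖ ≤ d * M * c := by
  refine (norm_sum_le_of_le _ fun ℓ _ => norm_inv_smul_sum_smul_le M.2 hc
    (fun k => (PiLp.norm_apply_le (v k) ℓ).trans (hv k)) (ha ℓ)).trans_eq ?_
  simp [mul_assoc]

theorem norm_mfField_le [IsProbabilityMeasure μ] (hH : ∀ z ∈ closedBall 0 ρ, ‖H z‖ ≤ C)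
    (hG : ∀ ℓ, ∀ z ∈ closedBall 0 ρ, ‖G ℓ z‖ ≤ C) (hv : ∀ k, ‖v k‖ ≤ M)
    (hμ : ∀ᵐ ξ ∂μ, x - ξ ∈ closedBall 0 ρ) (hY : ∀ k, x - Y k ∈ closedBall 0 ρ) :
    ‖mfField H G μ v Y x‖ ≤ (1 + d * M) * C := by
  rw [add_mul, one_mul]
  refine norm_add_le_of_le ?_ (norm_sum_inv_smul_sum_le C.2 hv fun ℓ k => hG ℓ _ (hY k))
  simpa using norm_integral_le_of_norm_le_const (hμ.mono fun ξ hξ => hH _ hξ)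

theorem norm_mfField_sub_mfField_le [IsProbabilityMeasure μ] (hHc : Continuous H)
    (hH : LipschitzOnWith K H (closedBall 0 ρ)) (hG : ∀ ℓ, LipschitzOnWith K (G ℓ) (closedBall 0 ρ))
    (hv : ∀ k, ‖v k‖ ≤ M) (hμx : ∀ᵐ ξ ∂μ, x - ξ ∈ closedBall 0 ρ)
    (hμy : ∀ᵐ ξ ∂μ, y - ξ ∈ closedBall 0 ρ) (hYx : ∀ k, x - Y k ∈ closedBall 0 ρ)
    (hYy : ∀ k, y - Y k ∈ closedBall 0 ρ) :
    ‖mfField H G μ v Y x - mfField H G μ v Y y‖ ≤ (1 + d * M) * (K * ‖x - y‖) := by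
  obtain ⟨c, hc⟩ := (isCompact_closedBall 0 ρ).exists_bound_of_continuousOn hHc.continuousOn
  have hint : ∀ z, (∀ᵐ ξ ∂μ, z - ξ ∈ closedBall 0 ρ) → Integrable (fun ξ => H (z - ξ)) μ :=
    fun z hz => (integrable_const c).mono' (by fun_prop) (hz.mono fun ξ hξ => hc _ hξ)
  have hsub : ∀ z, x - z - (y - z) = x - y := fun z => by abel
  rw [mfField, mfField, add_sub_add_comm, ← integral_sub (hint x hμx) (hint y hμy),
    ← Finset.sum_sub_distrib, add_mul, one_mul]
  simp only [← smul_sub, ← Finset.sum_sub_distrib]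
  refine norm_add_le_of_le ?_ (norm_sum_inv_smul_sum_le (by positivity) hv fun ℓ k =>
    ((hG ℓ).norm_sub_le (hYx k) (hYy k)).trans_eq (by rw [hsub]))
  simpa using norm_integral_le_of_norm_le_const (μ := μ) (C := K * ‖x - y‖) <| by
    filter_upwards [hμx, hμy] with ξ hξx hξy
    exact (hH.norm_sub_le hξx hξy).trans_eq (by rw [hsub])

theorem HypA.exists_bound_and_lipschitzOnWith (hA : HypA m H G) (ρ : ℝ) :
    ∃ C K : ℝ≥0, (∀ z ∈ closedBall 0 ρ, ‖H z‖ ≤ C) ∧ (∀ ℓ, ∀ z ∈ closedBall 0 ρ, ‖G ℓ z‖ ≤ C) ∧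
      LipschitzOnWith K H (closedBall 0 ρ) ∧ ∀ ℓ, LipschitzOnWith K (G ℓ) (closedBall 0 ρ) := by
  obtain ⟨hH, hG, ⟨C, hC, hHC, hGC⟩, -, -⟩ := hA
  have hlip : ∀ F : EuclideanSpace ℝ (Fin d) → EuclideanSpace ℝ (Fin d), LocallyLipschitz F →
      ∃ K, LipschitzOnWith K F (closedBall 0 ρ) := fun F hF =>
    hF.locallyLipschitzOn.exists_lipschitzOnWith_of_compact (isCompact_closedBall 0 ρ)
  obtain ⟨K, hK⟩ := hlip H hH
  choose κ hκ using fun ℓ => hlip (G ℓ) (hG ℓ)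
  have hbound : ∀ z ∈ closedBall (0 : EuclideanSpace ℝ (Fin d)) ρ,
      C * (1 + ‖z‖) ≤ (C * (1 + ρ)).toNNReal := fun z hz =>
    (mul_le_mul_of_nonneg_left (by simpa using hz) hC).trans (Real.le_coe_toNNReal _)
  exact ⟨(C * (1 + ρ)).toNNReal, K + ∑ ℓ, κ ℓ, fun z hz => (hHC z).trans (hbound z hz),
    fun ℓ z hz => (hGC ℓ z).trans (hbound z hz), hK.weaken le_self_add, fun ℓ => (hκ ℓ).weaken <|
      (Finset.single_le_sum (f := κ) (fun _ _ => zero_le) (Finset.mem_univ ℓ)).trans le_add_self⟩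

theorem HypA.exists_norm_mfField_sub_mfField_le (hA : HypA m H G) {R : ℝ} (hR : 0 < R) (M : ℝ≥0) :
    ∃ K : ℝ≥0, ∀ μ ν : Measure (EuclideanSpace ℝ (Fin d)),
      IsProbabilityMeasure μ → IsProbabilityMeasure ν →
      msupport μ ⊆ closedBall 0 R → msupport ν ⊆ closedBall 0 R →
      ∀ v Y Y' : Fin m → EuclideanSpace ℝ (Fin d), (∀ k, ‖v k‖ ≤ M) → ∀ x ∈ closedBall 0 R,
        ‖mfField H G μ v Y x - mfField H G ν v Y' x‖ ≤ K * chiDist Y Y' μ ν := by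
  obtain ⟨-, -, -, hH, hG⟩ := hA
  obtain ⟨L₁, hL₁, hH⟩ := hH R hR R hR
  obtain ⟨L₂, hL₂, hG⟩ := hG R hR M M.2
  refine ⟨⟨L₁ + d * L₂, by positivity⟩, fun μ ν hμ hν hμR hνR v Y Y' hv x hx => ?_⟩
  have hleaders : ‖∑ ℓ, (m : ℝ)⁻¹ • ∑ k, v k ℓ • (G ℓ (x - Y k) - G ℓ (x - Y' k))‖ ≤
      d * L₂ * ((m : ℝ)⁻¹ * ∑ k, ‖Y k - Y' k‖) := by
    refine (norm_sum_le_of_le _ fun ℓ _ => hG ℓ (fun k => v k ℓ)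
      (fun k => (PiLp.norm_apply_le (v k) ℓ).trans (hv k)) Y Y' x hx).trans_eq ?_
    simp [mul_assoc]
  rw [mfField, mfField, add_sub_add_comm, ← Finset.sum_sub_distrib]
  simp only [← smul_sub, ← Finset.sum_sub_distrib]
  refine (norm_add_le_of_le (hH μ ν hμ hν hμR hνR x hx) hleaders).trans ?_
  change _ ≤ (L₁ + d * L₂) * (_ + _)
  rw [mul_add, add_comm]
  gcongr
  · exact le_add_of_nonneg_left hL₁
  · exact W1_nonneg μ ν
  · exact le_add_of_nonneg_right (by positivity)

end MeanFieldVectorField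

namespace IsMFSol

variable {d m : ℕ} {T R M : ℝ} {H : EuclideanSpace ℝ (Fin d) → EuclideanSpace ℝ (Fin d)}
  {G : Fin d → EuclideanSpace ℝ (Fin d) → EuclideanSpace ℝ (Fin d)}
  {u Y Y₁ Y₂ : ℝ → Fin m → EuclideanSpace ℝ (Fin d)}
  {μ μ₁ μ₂ : ℝ → Measure (EuclideanSpace ℝ (Fin d))} {t : ℝ}

theorem isProbabilityMeasure (hs : IsMFSol T H G u Y μ) (ht : t ∈ Icc 0 T) :
    IsProbabilityMeasure (μ t) :=
  hs.1 t ht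

theorem leader_eq (hs : IsMFSol T H G u Y μ) (ht : t ∈ Icc 0 T) (k : Fin m) :
    Y t k = Y 0 k + ∫ s in (0 : ℝ)..t, u s k :=
  hs.2.2.2.1 k t ht

theorem leader_sub_leader (hs₁ : IsMFSol T H G u Y₁ μ₁) (hs₂ : IsMFSol T H G u Y₂ μ₂)
    (ht : t ∈ Icc 0 T) (k : Fin m) : Y₁ t k - Y₂ t k = Y₁ 0 k - Y₂ 0 k := by
  rw [hs₁.leader_eq ht, hs₂.leader_eq ht, add_sub_add_right_eq_sub]

theorem norm_leader_le (hs : IsMFSol T H G u Y μ) (hu : ∀ t k, ‖u t k‖ ≤ M) (hM : 0 ≤ M)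
    (ht : t ∈ Icc 0 T) (k : Fin m) : ‖Y t k‖ ≤ ‖Y 0 k‖ + M * T := by
  rw [hs.leader_eq ht]
  refine norm_add_le_of_le le_rfl
    ((intervalIntegral.norm_integral_le_of_norm_le_const fun s _ => hu s k).trans ?_)
  rw [sub_zero, abs_of_nonneg ht.1]
  exact mul_le_mul_of_nonneg_left ht.2 hM

theorem continuous_leader (hs : IsMFSol T H G u Y μ) (hT : 0 ≤ T) (humeas : Measurable u)
    (hu : ∀ t k, ‖u t k‖ ≤ M) (k : Fin m) : Continuous fun s => Y (projIcc 0 T hT s) k := by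
  have hint : ∀ a b, IntervalIntegrable (fun s => u s k) volume a b := fun a b =>
    intervalIntegrable_const.mono_fun'
      ((measurable_pi_apply k).comp humeas).aestronglyMeasurable (.of_forall fun s => hu s k)
  simp only [hs.leader_eq (projIcc 0 T hT _).2]
  exact continuous_const.add ((intervalIntegral.continuous_primitive hint 0).comp
    (continuous_subtype_val.comp continuous_projIcc))

theorem continuous_of_dist_le_mul_W1 (hs : IsMFSol T H G u Y μ) (hT : 0 ≤ T) {X : Type*}
    [PseudoMetricSpace X] {F : Measure (EuclideanSpace ℝ (Fin d)) → X} {L : ℝ} (hL : 0 ≤ L)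
    (hF : ∀ s ∈ Icc 0 T, ∀ t ∈ Icc 0 T, dist (F (μ s)) (F (μ t)) ≤ L * W1 (μ s) (μ t)) :
    Continuous fun s => F (μ (projIcc 0 T hT s)) := by
  suffices hc : Continuous fun q : Icc (0 : ℝ) T => F (μ q) from hc.comp continuous_projIcc
  refine Metric.continuous_iff.2 fun q ε hε => ?_
  obtain ⟨δ, hδ, hW⟩ := hs.2.2.1 q q.2 (ε / (L + 1)) (by positivity)
  refine ⟨δ, hδ, fun p hp => (hF p p.2 q q.2).trans_lt ?_⟩
  have hlt : W1 (μ p) (μ q) < ε / (L + 1) :=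
    (le_add_of_nonneg_left (by positivity)).trans_lt (hW p p.2 hp)
  calc L * W1 (μ p) (μ q) ≤ (L + 1) * W1 (μ p) (μ q) :=
        mul_le_mul_of_nonneg_right (by linarith) (W1_nonneg _ _)
    _ < ε := by rwa [lt_div_iff₀' (by positivity)] at hlt

theorem continuous_convolution (hs : IsMFSol T H G u Y μ) (hA : HypA m H G) (hT : 0 ≤ T)
    (hR : 0 < R) (hμR : ∀ t ∈ Icc 0 T, msupport (μ t) ⊆ closedBall 0 R)
    {x : EuclideanSpace ℝ (Fin d)} (hx : x ∈ closedBall 0 R) :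
    Continuous fun s => ∫ ξ, H (x - ξ) ∂μ (projIcc 0 T hT s) := by
  obtain ⟨L, hL, hHW⟩ := hA.2.2.2.1 R hR R hR
  refine hs.continuous_of_dist_le_mul_W1 hT hL (F := fun ν => ∫ ξ, H (x - ξ) ∂ν)
    fun s hs' t ht => ?_
  rw [dist_eq_norm]
  exact hHW _ _ (hs.isProbabilityMeasure hs') (hs.isProbabilityMeasure ht) (hμR s hs') (hμR t ht)
    x hx

theorem measurable_measure (hs : IsMFSol T H G u Y μ) (hT : 0 ≤ T)
    (hμR : ∀ t ∈ Icc 0 T, ∀ᵐ x ∂μ t, ‖x‖ ≤ R) : Measurable fun s => μ (projIcc 0 T hT s) := by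
  have hprob : ∀ s, IsProbabilityMeasure (μ (projIcc 0 T hT s)) := fun s =>
    hs.isProbabilityMeasure (projIcc 0 T hT s).2
  refine measurable_measure_of_measurable_integral fun f K hf => Continuous.measurable <|
    hs.continuous_of_dist_le_mul_W1 hT K.2 (F := fun ν => ∫ x, f x ∂ν) fun s hs' t ht => ?_
  have := hs.isProbabilityMeasure hs'
  have := hs.isProbabilityMeasure ht
  exact abs_integral_sub_le_mul_W1 (integrable_dist_of_ae_norm_le (hμR s hs'))
    (integrable_dist_of_ae_norm_le (hμR t ht)) hf

theorem integral_eq_of_contDiff (hs : IsMFSol T H G u Y μ)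
    (hμR : ∀ t ∈ Icc 0 T, ∀ᵐ x ∂μ t, ‖x‖ ≤ R) (hR : 0 < R) {ψ : EuclideanSpace ℝ (Fin d) → ℝ}
    (hψ : ContDiff ℝ ∞ ψ) (ht : t ∈ Icc 0 T) :
    ∫ x, ψ x ∂μ t = (∫ x, ψ x ∂μ 0) + ∫ s in (0 : ℝ)..t,
      ∫ x, fderiv ℝ ψ x (mfField H G (μ s) (u s) (Y s) x) ∂μ s := by
  let χ : ContDiffBump (0 : EuclideanSpace ℝ (Fin d)) := ⟨R + 1, R + 2, by linarith, by linarith⟩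
  have hloc : ∀ x, ‖x‖ ≤ R → (fun x => χ x * ψ x) =ᶠ[𝓝 x] ψ := fun x hx => by
    have hxχ : x ∈ ball 0 χ.rIn := mem_ball_zero_iff.2 (hx.trans_lt (lt_add_one R))
    filter_upwards [χ.eventuallyEq_one_of_mem_ball hxχ] with y hy
    simp [hy]
  have hval : ∀ s ∈ Icc 0 T, ∫ x, χ x * ψ x ∂μ s = ∫ x, ψ x ∂μ s := fun s hs' =>
    integral_congr_ae ((hμR s hs').mono fun x hx => (hloc x hx).eq_of_nhds)
  rw [← hval t ht, ← hval 0 ⟨le_rfl, ht.1.trans ht.2⟩,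
    hs.2.2.2.2 _ (χ.contDiff.mul hψ) χ.hasCompactSupport.mul_right t ht]
  congr 1
  refine intervalIntegral.integral_congr fun s hs' => ?_
  rw [uIcc_of_le ht.1] at hs'
  refine integral_congr_ae ((hμR s ⟨hs'.1, hs'.2.trans ht.2⟩).mono fun x hx => ?_)
  simp only [gradient, (hloc x hx).fderiv_eq, InnerProductSpace.toDual_symm_apply]

end IsMFSol

section Truncation

variable {d m : ℕ} {T R : ℝ} {M : ℝ≥0}
  {H : EuclideanSpace ℝ (Fin d) → EuclideanSpace ℝ (Fin d)}
  {G : Fin d → EuclideanSpace ℝ (Fin d) → EuclideanSpace ℝ (Fin d)}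
  {u Y : ℝ → Fin m → EuclideanSpace ℝ (Fin d)} {μ : ℝ → Measure (EuclideanSpace ℝ (Fin d))}
  {P : EuclideanSpace ℝ (Fin d) → EuclideanSpace ℝ (Fin d)}

/-- The mean-field vector field along the curve `(Y, μ)`, with the time clamped to `[0, T]` and the
space variable precomposed with `P`. When `P` retracts the space onto a ball carrying all `μ t`,
the continuity equation for `μ` is unaffected while the field becomes bounded and globally
Lipschitz. -/
def truncatedField (hT : 0 ≤ T) (H : EuclideanSpace ℝ (Fin d) → EuclideanSpace ℝ (Fin d))
    (G : Fin d → EuclideanSpace ℝ (Fin d) → EuclideanSpace ℝ (Fin d))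
    (u Y : ℝ → Fin m → EuclideanSpace ℝ (Fin d)) (μ : ℝ → Measure (EuclideanSpace ℝ (Fin d)))
    (P : EuclideanSpace ℝ (Fin d) → EuclideanSpace ℝ (Fin d)) (s : ℝ)
    (x : EuclideanSpace ℝ (Fin d)) : EuclideanSpace ℝ (Fin d) :=
  mfField H G (μ (projIcc 0 T hT s)) (u s) (Y (projIcc 0 T hT s)) (P x)

theorem truncatedField_of_mem (hT : 0 ≤ T) {s : ℝ} (hs : s ∈ Icc 0 T)
    (x : EuclideanSpace ℝ (Fin d)) :
    truncatedField hT H G u Y μ P s x = mfField H G (μ s) (u s) (Y s) (P x) := by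
  rw [truncatedField, projIcc_of_mem hT hs]

theorem IsMFSol.isTransport (hs : IsMFSol T H G u Y μ) (hT : 0 ≤ T) (hR : 0 < R)
    (hμR : ∀ t ∈ Icc 0 T, msupport (μ t) ⊆ closedBall 0 R) (hP : ∀ x ∈ closedBall 0 R, P x = x) :
    IsTransport T (truncatedField hT H G u Y μ P) fun s => μ (projIcc 0 T hT s) where
  isProbabilityMeasure s := hs.isProbabilityMeasure (projIcc 0 T hT s).2
  integrable_dist s :=
    have := hs.isProbabilityMeasure (projIcc 0 T hT s).2
    integrable_dist_of_ae_norm_le (ae_norm_le_of_msupport_subset (hμR _ (projIcc 0 T hT s).2))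
  measurable := hs.measurable_measure hT fun t ht => ae_norm_le_of_msupport_subset (hμR t ht)
  integral_eq ψ hψ _ _ t ht := by
    have hae : ∀ t ∈ Icc 0 T, ∀ᵐ x ∂μ t, ‖x‖ ≤ R := fun t ht =>
      ae_norm_le_of_msupport_subset (hμR t ht)
    simp only [projIcc_of_mem hT ht, projIcc_left]
    rw [hs.integral_eq_of_contDiff hae hR hψ ht]
    congr 1
    refine intervalIntegral.integral_congr fun s hs' => ?_
    rw [uIcc_of_le ht.1] at hs'
    have hsT : s ∈ Icc 0 T := ⟨hs'.1, hs'.2.trans ht.2⟩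
    simp only [truncatedField_of_mem hT hsT, projIcc_of_mem hT hsT]
    refine integral_congr_ae ((hae s hsT).mono fun x hx => ?_)
    simp only [hP x (by simpa using hx)]

theorem IsMFSol.measurable_truncatedField (hs : IsMFSol T H G u Y μ) (hA : HypA m H G)
    (hT : 0 ≤ T) (humeas : Measurable u) (hu : ∀ t k, ‖u t k‖ ≤ M) (hR : 0 < R)
    (hμR : ∀ t ∈ Icc 0 T, msupport (μ t) ⊆ closedBall 0 R) {x : EuclideanSpace ℝ (Fin d)}
    (hPx : P x ∈ closedBall 0 R) : Measurable fun s => truncatedField hT H G u Y μ P s x := by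
  refine (hs.continuous_convolution hA hT hR hμR hPx).measurable.add
    (Finset.measurable_fun_sum _ fun ℓ _ => Measurable.fun_const_smul
      (Finset.measurable_fun_sum _ fun k _ => Measurable.fun_smul ?_ ?_) _)
  · exact (PiLp.continuous_apply 2 _ ℓ).measurable.comp ((measurable_pi_apply k).comp humeas)
  · exact ((hA.2.1 ℓ).continuous.comp
      (continuous_const.sub (hs.continuous_leader hT humeas hu k))).measurable

theorem HypA.exists_isLipschitzField_truncatedField (hA : HypA m H G) (hT : 0 ≤ T) (hR : 0 < R)
    (M : ℝ≥0) (r : ℝ) (hP : LipschitzWith 1 P) (hPR : ∀ x, P x ∈ closedBall 0 R) :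
    ∃ B L : ℝ≥0, ∀ u Y : ℝ → Fin m → EuclideanSpace ℝ (Fin d),
      ∀ μ : ℝ → Measure (EuclideanSpace ℝ (Fin d)), Measurable u → (∀ t k, ‖u t k‖ ≤ M) →
      IsMFSol T H G u Y μ → (∀ k, ‖Y 0 k‖ ≤ r) →
      (∀ t ∈ Icc 0 T, msupport (μ t) ⊆ closedBall 0 R) →
      IsLipschitzField B L (truncatedField hT H G u Y μ P) := by
  obtain ⟨C, K, hHC, hGC, hHK, hGK⟩ :=
    hA.exists_bound_and_lipschitzOnWith (R + max R (r + M * T))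
  refine ⟨(1 + d * M) * C, (1 + d * M) * K, fun u Y μ humeas hu hs hY hμR => ?_⟩
  have hμ : ∀ s x, ∀ᵐ ξ ∂μ (projIcc 0 T hT s),
      P x - ξ ∈ closedBall 0 (R + max R (r + M * T)) := fun s x => by
    filter_upwards [ae_norm_le_of_msupport_subset (hμR _ (projIcc 0 T hT s).2)] with ξ hξ
    exact mem_closedBall_zero_iff.2
      (norm_sub_le_of_le (mem_closedBall_zero_iff.1 (hPR x)) (hξ.trans (le_max_left _ _)))
  have hYρ : ∀ s x k,
      P x - Y (projIcc 0 T hT s) k ∈ closedBall 0 (R + max R (r + M * T)) := fun s x k =>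
    mem_closedBall_zero_iff.2 <| norm_sub_le_of_le (mem_closedBall_zero_iff.1 (hPR x)) <|
      (hs.norm_leader_le hu M.2 (projIcc 0 T hT s).2 k).trans <|
        (add_le_add_left (hY k) _).trans (le_max_right _ _)
  have hprob : ∀ s, IsProbabilityMeasure (μ (projIcc 0 T hT s)) := fun s =>
    hs.isProbabilityMeasure (projIcc 0 T hT s).2
  refine ⟨fun s x => ?_, fun s => LipschitzWith.of_dist_le_mul fun x y => ?_, fun x =>
    hs.measurable_truncatedField hA hT humeas hu hR hμR (hPR x)⟩
  · exact_mod_cast norm_mfField_le hHC hGC (hu s) (hμ s x) (hYρ s x)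
  · rw [dist_eq_norm, NNReal.coe_mul, mul_assoc]
    refine (norm_mfField_sub_mfField_le hA.1.continuous hHK hGK (hu s) (hμ s x) (hμ s y)
      (hYρ s x) (hYρ s y)).trans ?_
    push_cast
    gcongr
    simpa [dist_eq_norm] using hP.dist_le_mul x y

end Truncation

section Gronwall

theorem integral_mul_exp_le {S θ : ℝ} (hS : 0 ≤ S) (hθ : 0 < θ) (t : ℝ) :
    ∫ s in (0 : ℝ)..t, S * Real.exp (θ * s) ≤ S / θ * Real.exp (θ * t) := by
  rw [intervalIntegral.integral_const_mul, intervalIntegral.integral_comp_mul_left _ hθ.ne',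
    integral_exp, mul_zero, Real.exp_zero, smul_eq_mul, ← mul_assoc, ← div_eq_mul_inv]
  gcongr
  linarith

theorem add_mul_integral_mul_exp_le {b c S t : ℝ} (hb : 0 ≤ b) (hc : 0 ≤ c) (hS : 0 ≤ S)
    (ht : 0 ≤ t) :
    b + c * ∫ s in (0 : ℝ)..t, S * Real.exp ((2 * c + 1) * s) ≤
      (b + S / 2) * Real.exp ((2 * c + 1) * t) := by
  have hθ : 0 < 2 * c + 1 := by positivity
  have hexp : 1 ≤ Real.exp ((2 * c + 1) * t) := Real.one_le_exp (mul_nonneg hθ.le ht)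
  have hhalf : c * (S / (2 * c + 1)) ≤ S / 2 := by
    rw [mul_div_left_comm]
    refine (mul_le_mul_of_nonneg_left ?_ hS).trans_eq (div_eq_mul_one_div S 2).symm
    rw [div_le_div_iff₀ hθ two_pos]
    linarith
  calc b + c * ∫ s in (0 : ℝ)..t, S * Real.exp ((2 * c + 1) * s)
      ≤ b + c * (S / (2 * c + 1) * Real.exp ((2 * c + 1) * t)) := by
        gcongr
        exact integral_mul_exp_le hS hθ t
    _ ≤ b * Real.exp ((2 * c + 1) * t) + S / 2 * Real.exp ((2 * c + 1) * t) := by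
        rw [← mul_assoc]
        gcongr
        exact le_mul_of_one_le_right hb hexp
    _ = (b + S / 2) * Real.exp ((2 * c + 1) * t) := (add_mul _ _ _).symm

-- `f` need not be measurable: it is compared with its exponentially weighted supremum `S`, and the
-- weight is chosen so that the estimate reads `S ≤ b + S / 2`.
theorem le_mul_exp_of_forall_continuous_majorant {f : ℝ → ℝ} {T b c : ℝ} (hb : 0 ≤ b)
    (hc : 0 ≤ c) (hf : ∀ t ∈ Icc 0 T, 0 ≤ f t) (hbdd : BddAbove (f '' Icc 0 T))
    (h : ∀ κ : ℝ → ℝ, Continuous κ → (∀ s ∈ Icc 0 T, f s ≤ κ s) →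
      ∀ t ∈ Icc 0 T, f t ≤ b + c * ∫ s in (0 : ℝ)..t, κ s) :
    ∀ t ∈ Icc 0 T, f t ≤ 2 * b * Real.exp ((2 * c + 1) * t) := by
  set θ := 2 * c + 1
  have hθ : 0 < θ := by positivity
  set g : ℝ → ℝ := fun s => f s * Real.exp (-(θ * s))
  obtain ⟨F, hF⟩ := hbdd
  have hgbdd : BddAbove (g '' Icc 0 T) := by
    refine ⟨F, forall_mem_image.2 fun s hs => (mul_le_of_le_one_right (hf s hs) ?_).trans
      (hF (mem_image_of_mem f hs))⟩
    exact Real.exp_le_one_iff.2 (neg_nonpos.2 (mul_nonneg hθ.le hs.1))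
  set S := sSup (g '' Icc 0 T)
  have hS : 0 ≤ S := Real.sSup_nonneg (forall_mem_image.2 fun s hs =>
    mul_nonneg (hf s hs) (Real.exp_pos _).le)
  have hfS : ∀ s ∈ Icc 0 T, f s ≤ S * Real.exp (θ * s) := fun s hs => by
    have hgS : g s ≤ S := le_csSup hgbdd (mem_image_of_mem g hs)
    rwa [← div_le_iff₀ (Real.exp_pos _), div_eq_mul_inv, ← Real.exp_neg]
  have hgle : ∀ t ∈ Icc 0 T, g t ≤ b + S / 2 := fun t ht => by
    change f t * Real.exp (-(θ * t)) ≤ _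
    rw [Real.exp_neg, ← div_eq_mul_inv, div_le_iff₀ (Real.exp_pos _)]
    exact (h _ (by fun_prop) hfS t ht).trans (add_mul_integral_mul_exp_le hb hc hS ht.1)
  intro t ht
  have hSle : S ≤ b + S / 2 :=
    csSup_le (Set.Nonempty.image _ ⟨t, ht⟩) (forall_mem_image.2 hgle)
  exact (hfS t ht).trans (mul_le_mul_of_nonneg_right (by linarith) (Real.exp_pos _).le)

end Gronwall

section Stability

variable {d m : ℕ} {T R : ℝ} {H : EuclideanSpace ℝ (Fin d) → EuclideanSpace ℝ (Fin d)}
  {G : Fin d → EuclideanSpace ℝ (Fin d) → EuclideanSpace ℝ (Fin d)}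
  {u Y₁ Y₂ : ℝ → Fin m → EuclideanSpace ℝ (Fin d)}
  {μ₁ μ₂ : ℝ → Measure (EuclideanSpace ℝ (Fin d))} {t : ℝ}

theorem chiDist_nonneg (Y Y' : Fin m → EuclideanSpace ℝ (Fin d))
    (μ ν : Measure (EuclideanSpace ℝ (Fin d))) : 0 ≤ chiDist Y Y' μ ν :=
  add_nonneg (by positivity) (W1_nonneg μ ν)

namespace IsMFSol

theorem chiDist_eq (hs₁ : IsMFSol T H G u Y₁ μ₁) (hs₂ : IsMFSol T H G u Y₂ μ₂)
    (ht : t ∈ Icc 0 T) : chiDist (Y₁ t) (Y₂ t) (μ₁ t) (μ₂ t) =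
      (m : ℝ)⁻¹ * ∑ k, ‖Y₁ 0 k - Y₂ 0 k‖ + W1 (μ₁ t) (μ₂ t) := by
  simp only [chiDist, hs₁.leader_sub_leader hs₂ ht]

theorem bddAbove_chiDist (hs₁ : IsMFSol T H G u Y₁ μ₁) (hs₂ : IsMFSol T H G u Y₂ μ₂)
    (hμ₁ : ∀ t ∈ Icc 0 T, msupport (μ₁ t) ⊆ closedBall 0 R)
    (hμ₂ : ∀ t ∈ Icc 0 T, msupport (μ₂ t) ⊆ closedBall 0 R) :
    BddAbove ((fun t => chiDist (Y₁ t) (Y₂ t) (μ₁ t) (μ₂ t)) '' Icc 0 T) := by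
  refine ⟨(m : ℝ)⁻¹ * ∑ k, ‖Y₁ 0 k - Y₂ 0 k‖ + (R + R), forall_mem_image.2 fun t ht => ?_⟩
  have := hs₁.isProbabilityMeasure ht
  have := hs₂.isProbabilityMeasure ht
  rw [hs₁.chiDist_eq hs₂ ht]
  exact add_le_add le_rfl (W1_le_of_ae_norm_le (ae_norm_le_of_msupport_subset (hμ₁ t ht))
    (ae_norm_le_of_msupport_subset (hμ₂ t ht)))

theorem chiDist_le_of_W1_le (hs₁ : IsMFSol T H G u Y₁ μ₁) (hs₂ : IsMFSol T H G u Y₂ μ₂)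
    (ht : t ∈ Icc 0 T) {a I : ℝ} (ha : 1 ≤ a)
    (hW : W1 (μ₁ t) (μ₂ t) ≤ a * (W1 (μ₁ 0) (μ₂ 0) + I)) :
    chiDist (Y₁ t) (Y₂ t) (μ₁ t) (μ₂ t) ≤
      a * chiDist (Y₁ 0) (Y₂ 0) (μ₁ 0) (μ₂ 0) + a * I := by
  have hD : 0 ≤ (m : ℝ)⁻¹ * ∑ k, ‖Y₁ 0 k - Y₂ 0 k‖ := by positivity
  rw [hs₁.chiDist_eq hs₂ ht, chiDist]
  linarith [le_mul_of_one_le_left hD ha]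

end IsMFSol

theorem HypA.exists_chiDist_le_mul_integral (hA : HypA m H G) (hT : 0 ≤ T) (hR : 0 < R) (M : ℝ≥0)
    (r : ℝ) :
    ∃ a c : ℝ≥0, ∀ u Y₁ Y₂ : ℝ → Fin m → EuclideanSpace ℝ (Fin d),
      ∀ μ₁ μ₂ : ℝ → Measure (EuclideanSpace ℝ (Fin d)), Measurable u → (∀ t k, ‖u t k‖ ≤ M) →
      IsMFSol T H G u Y₁ μ₁ → IsMFSol T H G u Y₂ μ₂ →
      (∀ k, ‖Y₁ 0 k‖ ≤ r) → (∀ k, ‖Y₂ 0 k‖ ≤ r) →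
      (∀ t ∈ Icc 0 T, msupport (μ₁ t) ⊆ closedBall 0 R) →
      (∀ t ∈ Icc 0 T, msupport (μ₂ t) ⊆ closedBall 0 R) →
      ∀ κ : ℝ → ℝ, Continuous κ →
      (∀ s ∈ Icc 0 T, chiDist (Y₁ s) (Y₂ s) (μ₁ s) (μ₂ s) ≤ κ s) →
      ∀ t ∈ Icc 0 T, chiDist (Y₁ t) (Y₂ t) (μ₁ t) (μ₂ t) ≤
        a * chiDist (Y₁ 0) (Y₂ 0) (μ₁ 0) (μ₂ 0) + c * ∫ s in (0 : ℝ)..t, κ s := by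
  obtain ⟨P, hP, hPR, hPx⟩ := exists_lipschitzWith_one_retraction
    (E := EuclideanSpace ℝ (Fin d)) (nonempty_closedBall.2 hR.le)
    isClosed_closedBall.isComplete (convex_closedBall 0 R)
  obtain ⟨B, L, hfield⟩ := hA.exists_isLipschitzField_truncatedField hT hR M r hP hPR
  obtain ⟨K, hK⟩ := hA.exists_norm_mfField_sub_mfField_le hR M
  refine ⟨⟨Real.exp (L * T), by positivity⟩, ⟨Real.exp (L * T) * K, by positivity⟩,
    fun u Y₁ Y₂ μ₁ μ₂ humeas hu hs₁ hs₂ hY₁ hY₂ hμ₁ hμ₂ κ hκ hκle t ht => ?_⟩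
  have hdiff : ∀ s ∈ Icc 0 T, ∀ x, ‖truncatedField hT H G u Y₁ μ₁ P s x -
      truncatedField hT H G u Y₂ μ₂ P s x‖ ≤ K * κ s := fun s hs x => by
    rw [truncatedField_of_mem hT hs, truncatedField_of_mem hT hs]
    exact (hK _ _ (hs₁.isProbabilityMeasure hs) (hs₂.isProbabilityMeasure hs) (hμ₁ s hs)
      (hμ₂ s hs) _ _ _ (hu s) _ (hPR x)).trans (mul_le_mul_of_nonneg_left (hκle s hs) K.2)
  have hW := (hs₁.isTransport hT hR hμ₁ hPx).W1_le (hfield u Y₁ μ₁ humeas hu hs₁ hY₁ hμ₁)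
    (hs₂.isTransport hT hR hμ₂ hPx) (hfield u Y₂ μ₂ humeas hu hs₂ hY₂ hμ₂)
    (hκ.const_mul (K : ℝ)) hdiff ht
  simp only [projIcc_of_mem hT ht, projIcc_left, intervalIntegral.integral_const_mul] at hW
  have hI : 0 ≤ ∫ s in (0 : ℝ)..t, κ s := intervalIntegral.integral_nonneg ht.1 fun s hs =>
    (chiDist_nonneg _ _ _ _).trans (hκle s ⟨hs.1, hs.2.trans ht.2⟩)
  have hexp : Real.exp (L * t) ≤ Real.exp (L * T) := by gcongr; exact ht.2
  refine (hs₁.chiDist_le_of_W1_le hs₂ ht (Real.one_le_exp (by positivity))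
    (hW.trans (mul_le_mul_of_nonneg_right hexp ?_))).trans_eq ?_
  · exact add_nonneg (W1_nonneg _ _) (mul_nonneg K.2 hI)
  · change _ = Real.exp (L * T) * _ + Real.exp (L * T) * K * _
    rw [mul_assoc]

theorem HypA.exists_chiDist_le_mul (hA : HypA m H G) (hT : 0 ≤ T) (hR : 0 < R) (M : ℝ≥0) (r : ℝ) :
    ∃ C > 0, ∀ u Y₁ Y₂ : ℝ → Fin m → EuclideanSpace ℝ (Fin d),
      ∀ μ₁ μ₂ : ℝ → Measure (EuclideanSpace ℝ (Fin d)), Measurable u → (∀ t k, ‖u t k‖ ≤ M) →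
      IsMFSol T H G u Y₁ μ₁ → IsMFSol T H G u Y₂ μ₂ →
      (∀ k, ‖Y₁ 0 k‖ ≤ r) → (∀ k, ‖Y₂ 0 k‖ ≤ r) →
      (∀ t ∈ Icc 0 T, msupport (μ₁ t) ⊆ closedBall 0 R) →
      (∀ t ∈ Icc 0 T, msupport (μ₂ t) ⊆ closedBall 0 R) →
      ∀ t ∈ Icc 0 T, chiDist (Y₁ t) (Y₂ t) (μ₁ t) (μ₂ t) ≤
        C * chiDist (Y₁ 0) (Y₂ 0) (μ₁ 0) (μ₂ 0) := by
  obtain ⟨a, c, hmajorant⟩ := hA.exists_chiDist_le_mul_integral hT hR M r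
  refine ⟨2 * a * Real.exp ((2 * c + 1) * T) + 1, by positivity,
    fun u Y₁ Y₂ μ₁ μ₂ humeas hu hs₁ hs₂ hY₁ hY₂ hμ₁ hμ₂ t ht => ?_⟩
  set D := chiDist (Y₁ 0) (Y₂ 0) (μ₁ 0) (μ₂ 0)
  have hD : 0 ≤ D := chiDist_nonneg _ _ _ _
  calc chiDist (Y₁ t) (Y₂ t) (μ₁ t) (μ₂ t)
      ≤ 2 * (a * D) * Real.exp ((2 * c + 1) * t) :=
        le_mul_exp_of_forall_continuous_majorant (mul_nonneg a.2 hD) c.2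
          (fun _ _ => chiDist_nonneg _ _ _ _) (hs₁.bddAbove_chiDist hs₂ hμ₁ hμ₂)
          (hmajorant u Y₁ Y₂ μ₁ μ₂ humeas hu hs₁ hs₂ hY₁ hY₂ hμ₁ hμ₂) t ht
    _ ≤ 2 * (a * D) * Real.exp ((2 * c + 1) * T) := by gcongr; exact ht.2
    _ ≤ (2 * a * Real.exp ((2 * c + 1) * T) + 1) * D := by linarith

end Stability

/-- Stability/continuous dependence for the coupled leader/mean-field
system: under Hypothesis (A), two solutions relative to the same control `u` satisfy
`‖(Y¹(t),μ¹(t)) − (Y²(t),μ²(t))‖_χ ≤ C_T ‖(Y¹(0),μ¹(0)) − (Y²(0),μ²(0))‖_χ` on `[0,T]`. -/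
theorem mean_field_stability
    {d m : ℕ} (hm : 0 < m) (T : ℝ) (hT : 0 < T)
    (H : EuclideanSpace ℝ (Fin d) → EuclideanSpace ℝ (Fin d))
    (G : Fin d → EuclideanSpace ℝ (Fin d) → EuclideanSpace ℝ (Fin d))
    (hA : HypA m H G)
    (𝒰 : Set (Fin m → EuclideanSpace ℝ (Fin d)))
    (h𝒰 : IsCompact 𝒰) (h𝒰ne : 𝒰.Nonempty)
    (u : ℝ → Fin m → EuclideanSpace ℝ (Fin d))
    (humeas : Measurable u) (hu𝒰 : ∀ t, u t ∈ 𝒰)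
    (Y₁ Y₂ : ℝ → Fin m → EuclideanSpace ℝ (Fin d))
    (μ₁ μ₂ : ℝ → Measure (EuclideanSpace ℝ (Fin d)))
    (hsol₁ : IsMFSol T H G u Y₁ μ₁) (hsol₂ : IsMFSol T H G u Y₂ μ₂) :
    ∃ C > 0, ∀ t ∈ Icc (0:ℝ) T,
      chiDist (Y₁ t) (Y₂ t) (μ₁ t) (μ₂ t)
        ≤ C * chiDist (Y₁ 0) (Y₂ 0) (μ₁ 0) (μ₂ 0) := by
  obtain ⟨M, hM, hMu⟩ := h𝒰.isBounded.exists_pos_norm_le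
  obtain ⟨R₁, hR₁, hμ₁⟩ := hsol₁.2.1
  obtain ⟨R₂, -, hμ₂⟩ := hsol₂.2.1
  obtain ⟨C, hC, hstab⟩ := hA.exists_chiDist_le_mul hT.le (lt_max_of_lt_left hR₁ : 0 < max R₁ R₂)
    ⟨M, hM.le⟩ (max ‖Y₁ 0‖ ‖Y₂ 0‖)
  refine ⟨C, hC, hstab u Y₁ Y₂ μ₁ μ₂ humeas ?_ hsol₁ hsol₂ ?_ ?_ ?_ ?_⟩
  · exact fun t k => (norm_le_pi_norm _ k).trans (hMu _ (hu𝒰 t))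
  · exact fun k => (norm_le_pi_norm _ k).trans (le_max_left _ _)
  · exact fun k => (norm_le_pi_norm _ k).trans (le_max_right _ _)
  · exact fun t ht => (hμ₁ t ht).trans (closedBall_subset_closedBall (le_max_left _ _))
  · exact fun t ht => (hμ₂ t ht).trans (closedBall_subset_closedBall (le_max_right _ _))

end
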